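/- Let d ≥ 3 be an integer, u_⋆(x) = (1+|x|²)^{−(d−2)/2}, f_0 = u_⋆, f_i(x) = x_i u_⋆(x)/(1+|x|²) for i = 1,…,d, and f_{d+1}(x) = (1−|x|²) u_⋆(x)/(1+|x|²). Define the quadratic forms F[f] = ∫ |∇f|² dx − d(d+2) ∫ f² (1+|x|²)^{−2} dx and G[f] = (1/(d(d+2))) ∫ f² (1+|x|²)^{−2} dx − ∫ (f/(1+|x|²)²) (−Δ)^{−1}( f/(1+|x|²)² ) dx. Then, for f in D^{1,2}(ℝ^d) ∩ L²(ℝ^d, (1+|x|²)^{−2} dx) with ∫ f f_0 (1+|x|²)^{−2} dx = 0, the following are equivalent: F[f] = 0; G[f] = 0; f is a linear combination of f_1, …, f_{d+1}. -/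

import Mathlib

open MeasureTheory Real

noncomputable section

/-- Surface area of the unit sphere `𝕊^{d-1} ⊆ ℝ^d`. -/
def sphereArea (d : ℕ) : ℝ := 2 * Real.pi ^ ((d : ℝ) / 2) / Real.Gamma ((d : ℝ) / 2)

/-- Green function of `-Δ` on `ℝ^d`, `d ≥ 3`: `G_d(x) = |x|^{2-d} / ((d-2)|𝕊^{d-1}|)`. -/
def greenKernel (d : ℕ) (x : EuclideanSpace ℝ (Fin d)) : ℝ :=
  ‖x‖ ^ ((2 : ℝ) - d) / (((d : ℝ) - 2) * sphereArea d)

/-- `(−Δ)⁻¹ v`, the convolution of `v` with the Green function of `-Δ` on `ℝ^d`. -/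
def invLap (d : ℕ) (v : EuclideanSpace ℝ (Fin d) → ℝ) (x : EuclideanSpace ℝ (Fin d)) : ℝ :=
  ∫ y, greenKernel d (x - y) * v y

/-- The Aubin–Talenti (optimal Sobolev) constant
`S_d = (1/(π d (d−2))) (Γ(d)/Γ(d/2))^{2/d}`. -/
def sobolevConst (d : ℕ) : ℝ :=
  1 / (Real.pi * d * ((d : ℝ) - 2)) *
    (Real.Gamma (d : ℝ) / Real.Gamma ((d : ℝ) / 2)) ^ ((2 : ℝ) / (d : ℝ))

/-- Membership in `D^{1,2}(ℝ^d)`: a (weakly) differentiable function with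
`∇u ∈ L²` and `u ∈ L^{2*}`, `2* = 2d/(d-2)`. -/
def MemD12 (d : ℕ) (u : EuclideanSpace ℝ (Fin d) → ℝ) : Prop :=
  Differentiable ℝ u ∧
  Integrable (fun x => ‖gradient u x‖ ^ 2) ∧
  Integrable (fun x => |u x| ^ (2 * (d : ℝ) / ((d : ℝ) - 2)))

/-- The `L^p` norm of `u`, written with real exponents: `(∫ |u|^p)^{1/p}`. -/
def lpNorm' {d : ℕ} (p : ℝ) (u : EuclideanSpace ℝ (Fin d) → ℝ) : ℝ :=
  (∫ x, |u x| ^ p) ^ (1 / p)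

/-- The Laplacian `Δu = ∑ ∂²u/∂x_i²`. -/
def lap (d : ℕ) (u : EuclideanSpace ℝ (Fin d) → ℝ) (x : EuclideanSpace ℝ (Fin d)) : ℝ :=
  ∑ i : Fin d, iteratedFDeriv ℝ 2 u x ![EuclideanSpace.single i 1, EuclideanSpace.single i 1]

/-- The Aubin–Talenti extremal function `u_⋆(x) = (1+|x|²)^{−(d−2)/2}`. -/
def uAT (d : ℕ) (x : EuclideanSpace ℝ (Fin d)) : ℝ :=
  (1 + ‖x‖ ^ 2) ^ (-(((d : ℝ) - 2) / 2))

/-- `f_i(x) = x_i u_⋆(x)/(1+|x|²)`, `i = 1, …, d`. -/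
def atFi (d : ℕ) (i : Fin d) (x : EuclideanSpace ℝ (Fin d)) : ℝ :=
  x i * uAT d x / (1 + ‖x‖ ^ 2)

/-- `f_{d+1}(x) = (1−|x|²) u_⋆(x)/(1+|x|²)`. -/
def atFlast (d : ℕ) (x : EuclideanSpace ℝ (Fin d)) : ℝ :=
  (1 - ‖x‖ ^ 2) * uAT d x / (1 + ‖x‖ ^ 2)

/-- Orthogonality, in `L²(ℝ^d, (1+|x|²)^{−2} dx)`, to `f_0 = u_⋆`, `f_1, …, f_d` and
`f_{d+1}`. -/
def orthAT (d : ℕ) (f : EuclideanSpace ℝ (Fin d) → ℝ) : Prop :=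
  (∫ x, f x * uAT d x / (1 + ‖x‖ ^ 2) ^ 2) = 0 ∧
  (∀ i : Fin d, (∫ x, f x * atFi d i x / (1 + ‖x‖ ^ 2) ^ 2) = 0) ∧
  (∫ x, f x * atFlast d x / (1 + ‖x‖ ^ 2) ^ 2) = 0

/-- The quadratic form `F`, the second-order expansion of the Sobolev deficit
around the Aubin–Talenti function. -/
def quadF (d : ℕ) (f : EuclideanSpace ℝ (Fin d) → ℝ) : ℝ :=
  (∫ x, ‖gradient f x‖ ^ 2) -
    (d : ℝ) * ((d : ℝ) + 2) * ∫ x, f x ^ 2 / (1 + ‖x‖ ^ 2) ^ 2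

/-- The quadratic form `G`, the second-order expansion of the Hardy-Littlewood-Sobolev
deficit around the Aubin–Talenti function. -/
def quadG (d : ℕ) (f : EuclideanSpace ℝ (Fin d) → ℝ) : ℝ :=
  1 / ((d : ℝ) * ((d : ℝ) + 2)) * (∫ x, f x ^ 2 / (1 + ‖x‖ ^ 2) ^ 2) -
    ∫ x, f x / (1 + ‖x‖ ^ 2) ^ 2 *
      invLap d (fun y => f y / (1 + ‖y‖ ^ 2) ^ 2) x

/-- `f` is differentiable with partial derivatives `g i`. -/
def HD {d : ℕ} (f : EuclideanSpace ℝ (Fin d) → ℝ) (g : Fin d → EuclideanSpace ℝ (Fin d) → ℝ) :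
    Prop :=
  Differentiable ℝ f ∧ ∀ i x, fderiv ℝ f x (EuclideanSpace.single i 1) = g i x

section HDcalc
variable {d : ℕ} {f f₁ f₂ : EuclideanSpace ℝ (Fin d) → ℝ}
  {g g₁ g₂ : Fin d → EuclideanSpace ℝ (Fin d) → ℝ}

lemma HD.congr (h : HD f g) {f' : EuclideanSpace ℝ (Fin d) → ℝ}
    {g' : Fin d → EuclideanSpace ℝ (Fin d) → ℝ}
    (hf : ∀ x, f' x = f x) (hg : ∀ i x, g' i x = g i x) : HD f' g' := by
  obtain rfl : f' = f := funext hf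
  obtain rfl : g' = g := funext fun i => funext (hg i)
  exact h

lemma HD.const (c : ℝ) : HD (fun _ : EuclideanSpace ℝ (Fin d) => c) (fun _ _ => 0) :=
  ⟨differentiable_const c, fun i x => by simp⟩

lemma HD.add (h₁ : HD f₁ g₁) (h₂ : HD f₂ g₂) :
    HD (fun x => f₁ x + f₂ x) (fun i x => g₁ i x + g₂ i x) :=
  ⟨h₁.1.add h₂.1, fun i x => by
    rw [fderiv_fun_add (h₁.1 x) (h₂.1 x)]; simp [h₁.2, h₂.2]⟩

lemma HD.sub (h₁ : HD f₁ g₁) (h₂ : HD f₂ g₂) :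
    HD (fun x => f₁ x - f₂ x) (fun i x => g₁ i x - g₂ i x) :=
  ⟨h₁.1.sub h₂.1, fun i x => by
    rw [fderiv_fun_sub (h₁.1 x) (h₂.1 x)]; simp [h₁.2, h₂.2]⟩

lemma HD.mul (h₁ : HD f₁ g₁) (h₂ : HD f₂ g₂) :
    HD (fun x => f₁ x * f₂ x) (fun i x => g₁ i x * f₂ x + f₁ x * g₂ i x) :=
  ⟨h₁.1.mul h₂.1, fun i x => by
    rw [fderiv_fun_mul (h₁.1 x) (h₂.1 x)]; simp [h₁.2, h₂.2]; ring⟩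

lemma HD.const_mul (c : ℝ) (h₁ : HD f₁ g₁) :
    HD (fun x => c * f₁ x) (fun i x => c * g₁ i x) :=
  ((HD.const c).mul h₁).congr (fun _ => rfl) (fun i x => by simp)

lemma HD.sum {ι : Type*} (s : Finset ι) {F : ι → EuclideanSpace ℝ (Fin d) → ℝ}
    {G : ι → Fin d → EuclideanSpace ℝ (Fin d) → ℝ} (h : ∀ a ∈ s, HD (F a) (G a)) :
    HD (fun x => ∑ a ∈ s, F a x) (fun i x => ∑ a ∈ s, G a i x) := by
  classical
  induction s using Finset.induction_on with
  | empty => simpa using HD.const 0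
  | insert a s ha ih =>
    simp only [Finset.sum_insert ha]
    exact (h a (Finset.mem_insert_self a s)).add
      (ih fun b hb => h b (Finset.mem_insert_of_mem hb))

lemma HD.coord (j : Fin d) : HD (fun x : EuclideanSpace ℝ (Fin d) => x j)
    (fun i _ => if i = j then 1 else 0) := by
  have : (fun x : EuclideanSpace ℝ (Fin d) => x j) =
    (EuclideanSpace.proj j : EuclideanSpace ℝ (Fin d) →L[ℝ] ℝ) := by ext; simp
  rw [this]
  refine ⟨ContinuousLinearMap.differentiable _, fun i x => ?_⟩
  rw [ContinuousLinearMap.fderiv]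
  simp [eq_comm]

lemma HD.rcomp {φ φ' : ℝ → ℝ} (h : HD f g) (hφ : ∀ x, HasDerivAt φ (φ' (f x)) (f x)) :
    HD (fun x => φ (f x)) (fun i x => φ' (f x) * g i x) := by
  have : ∀ x, HasFDerivAt (fun x => φ (f x)) (φ' (f x) • fderiv ℝ f x) x := fun x =>
    (hφ x).comp_hasFDerivAt x (h.1 x).hasFDerivAt
  refine ⟨fun x => (this x).differentiableAt, fun i x => ?_⟩
  rw [(this x).fderiv]; simp [h.2]

lemma HD.continuous (h : HD f g) : Continuous f := h.1.continuous

lemma HD.hasLine (h : HD f g) (i : Fin d) (x : EuclideanSpace ℝ (Fin d)) :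
    HasLineDerivAt ℝ f (g i x) x (EuclideanSpace.single i 1) := by
  rw [← h.2]; exact (h.1 x).hasFDerivAt.hasLineDerivAt _

lemma HD.aff (h : HD f g) (c : ℝ) (x₀ : EuclideanSpace ℝ (Fin d)) :
    HD (fun x => f (c • (x - x₀))) (fun i x => c * g i (c • (x - x₀))) := by
  have : ∀ x, HasFDerivAt (fun x => f (c • (x - x₀)))
      ((fderiv ℝ f (c • (x - x₀))).comp (c • ContinuousLinearMap.id ℝ _)) x := fun x =>
    HasFDerivAt.comp x (h.1 _).hasFDerivAt (((hasFDerivAt_id x).sub_const x₀).const_smul c)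
  refine ⟨fun x => (this x).differentiableAt, fun i x => ?_⟩
  rw [(this x).fderiv]; simp [h.2]

lemma HD.normsq (d : ℕ) : HD (fun x : EuclideanSpace ℝ (Fin d) => 1 + ‖x‖ ^ 2)
    (fun i x => 2 * x i) := by
  have h : HD (fun x : EuclideanSpace ℝ (Fin d) => ∑ j, x j * x j)
      (fun i x => ∑ j, ((if i = j then 1 else 0) * x j + x j * (if i = j then 1 else 0))) :=
    HD.sum _ fun j _ => (HD.coord j).mul (HD.coord j)
  refine ((HD.const 1).add h).congr (fun x => ?_) (fun i x => ?_)
  · rw [EuclideanSpace.real_norm_sq_eq]; simp [sq]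
  · simp [Finset.sum_add_distrib]; ring

lemma HD.gradient_norm (h : HD f g) (x : EuclideanSpace ℝ (Fin d)) :
    ‖gradient f x‖ ^ 2 = ∑ i, g i x ^ 2 := by
  rw [EuclideanSpace.real_norm_sq_eq]
  refine Finset.sum_congr rfl fun i _ => ?_
  congr 1
  rw [← h.2 i x]
  have : inner ℝ (gradient f x) (EuclideanSpace.single i (1:ℝ)) = gradient f x i := by
    rw [EuclideanSpace.inner_single_right]; simp
  rw [← this, gradient, InnerProductSpace.toDual_symm_apply]

end HDcalc

/-- `(1+|x|²)⁻¹` -/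
def sF (d : ℕ) (x : EuclideanSpace ℝ (Fin d)) : ℝ := (1 + ‖x‖ ^ 2)⁻¹

lemma rho_pos {d : ℕ} (x : EuclideanSpace ℝ (Fin d)) : 0 < 1 + ‖x‖ ^ 2 := by positivity
lemma rho_one {d : ℕ} (x : EuclideanSpace ℝ (Fin d)) : 1 ≤ 1 + ‖x‖ ^ 2 := by
  nlinarith [sq_nonneg ‖x‖]
lemma sF_pos {d : ℕ} (x : EuclideanSpace ℝ (Fin d)) : 0 < sF d x := inv_pos.2 (rho_pos x)
lemma uAT_pos {d : ℕ} (x : EuclideanSpace ℝ (Fin d)) : 0 < uAT d x := rpow_pos_of_pos (rho_pos x) _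
lemma sF_rel {d : ℕ} (x : EuclideanSpace ℝ (Fin d)) :
    sF d x * (∑ i, x i ^ 2) = 1 - sF d x := by
  have := rho_pos x
  have h := EuclideanSpace.real_norm_sq_eq x
  rw [← h]; unfold sF; field_simp; ring

lemma HD_sF (d : ℕ) : HD (sF d) (fun i x => -2 * x i * sF d x ^ 2) := by
  have := (HD.normsq d).rcomp (φ := fun t => t⁻¹) (φ' := fun t => -(t ^ 2)⁻¹)
    (fun x => hasDerivAt_inv (rho_pos x).ne')
  refine this.congr (fun x => rfl) (fun i x => ?_)
  simp only [sF, inv_pow]; ring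

lemma HD_uAT (d : ℕ) : HD (uAT d) (fun i x => -((d : ℝ) - 2) * x i * sF d x * uAT d x) := by
  have := (HD.normsq d).rcomp (φ := fun t => t ^ (-(((d : ℝ) - 2) / 2)))
    (φ' := fun t => (-(((d : ℝ) - 2) / 2)) * t ^ (-(((d : ℝ) - 2) / 2) - 1))
    (fun x => hasDerivAt_rpow_const (Or.inl (rho_pos x).ne'))
  refine this.congr (fun x => rfl) (fun i x => ?_)
  simp only [sF, uAT]
  rw [rpow_sub_one (rho_pos x).ne']; field_simp

/-- partial derivatives of `u_⋆` -/
def duF (d : ℕ) (i : Fin d) (x : EuclideanSpace ℝ (Fin d)) : ℝ :=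
  -((d : ℝ) - 2) * x i * sF d x * uAT d x

/-- second partial derivatives of `u_⋆` -/
def dduF (d : ℕ) (i k : Fin d) (x : EuclideanSpace ℝ (Fin d)) : ℝ :=
  -((d : ℝ) - 2) * ((if k = i then 1 else 0) * sF d x * uAT d x - d * x i * x k * sF d x ^ 2 * uAT d x)

lemma HD_duF (d : ℕ) (i : Fin d) : HD (duF d i) (fun k x => dduF d i k x) := by
  refine ((((HD.coord i).const_mul (-((d : ℝ) - 2))).mul (HD_sF d)).mul (HD_uAT d)).congr
    (fun x => rfl) (fun k x => ?_)
  simp only [dduF]; ring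

lemma sum_dduF (d : ℕ) (x : EuclideanSpace ℝ (Fin d)) :
    ∑ i, dduF d i i x = -(d * ((d:ℝ) - 2)) * sF d x ^ 2 * uAT d x := by
  have h : ∑ i, dduF d i i x = -((d : ℝ) - 2) * (d * sF d x * uAT d x
      - d * sF d x * uAT d x * (sF d x * ∑ i, x i ^ 2)) := by
    have : ∀ i, dduF d i i x = -((d : ℝ) - 2) * sF d x * uAT d x
        + ((d : ℝ) - 2) * d * sF d x ^ 2 * uAT d x * x i ^ 2 := by
      intro i; simp only [dduF, if_true]; ring
    simp only [this, Finset.sum_add_distrib, ← Finset.mul_sum]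
    simp; ring
  rw [h, sF_rel]; ring

/-- inverse stereographic coordinates -/
def om (d : ℕ) (x : EuclideanSpace ℝ (Fin d)) : Option (Fin d) → ℝ
  | none => 2 * sF d x - 1
  | some j => 2 * x j * sF d x

/-- derivatives of `om` -/
def dom (d : ℕ) (a : Option (Fin d)) (i : Fin d) (x : EuclideanSpace ℝ (Fin d)) : ℝ :=
  match a with
  | none => -4 * x i * sF d x ^ 2
  | some j => 2 * (if i = j then 1 else 0) * sF d x - 4 * x i * x j * sF d x ^ 2

/-- second derivatives of `om` -/
def ddom (d : ℕ) (a : Option (Fin d)) (i k : Fin d) (x : EuclideanSpace ℝ (Fin d)) : ℝ :=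
  match a with
  | none => -4 * (if k = i then 1 else 0) * sF d x ^ 2 + 16 * x i * x k * sF d x ^ 3
  | some j => -4 * (if i = j then 1 else 0) * x k * sF d x ^ 2
      - 4 * ((if k = i then 1 else 0) * x j + x i * (if k = j then 1 else 0)) * sF d x ^ 2
      + 16 * x i * x j * x k * sF d x ^ 3

lemma HD_om (d : ℕ) (a : Option (Fin d)) : HD (fun x => om d x a) (dom d a) := by
  cases a with
  | none =>
    refine (((HD_sF d).const_mul 2).sub (HD.const 1)).congr (fun x => rfl) fun i x => ?_
    simp only [dom]; ring
  | some j =>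
    refine (((HD.coord j).const_mul 2).mul (HD_sF d)).congr (fun x => rfl) fun i x => ?_
    simp only [dom]; ring

lemma HD_dom (d : ℕ) (a : Option (Fin d)) (i : Fin d) : HD (dom d a i) (ddom d a i) := by
  cases a with
  | none =>
    refine (((HD.coord i).const_mul (-4)).mul ((HD_sF d).mul (HD_sF d))).congr
      (fun x => by simp only [dom]; ring) fun k x => ?_
    simp only [ddom]; ring
  | some j =>
    refine (((HD_sF d).const_mul (2 * (if i = j then 1 else 0))).sub
      ((((HD.coord i).const_mul 4).mul (HD.coord j)).mul ((HD_sF d).mul (HD_sF d)))).congr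
      (fun x => by simp only [dom]; ring) fun k x => ?_
    simp only [ddom]; ring

lemma sum_dom_dom (d : ℕ) (a b : Option (Fin d)) (x : EuclideanSpace ℝ (Fin d)) :
    ∑ i, dom d a i x * dom d b i x =
      4 * sF d x ^ 2 * ((if a = b then 1 else 0) - om d x a * om d x b) := by
  have hs := sF_rel x
  set S := ∑ i, x i ^ 2 with hS
  cases a with
  | none =>
    cases b with
    | none =>
      have : ∑ i, dom d none i x * dom d none i x = 16 * sF d x ^ 3 * (sF d x * S) := by
        simp only [dom, hS, Finset.mul_sum]
        exact Finset.sum_congr rfl fun i _ => by ring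
      rw [this, hs]; simp [om]; ring
    | some j =>
      have : ∑ i, dom d none i x * dom d (some j) i x
          = -8 * x j * sF d x ^ 3 + 16 * x j * sF d x ^ 3 * (sF d x * S) := by
        have : ∀ i, dom d none i x * dom d (some j) i x =
          (if i = j then -8 * x i * sF d x ^ 3 else 0) + 16 * x j * sF d x ^ 4 * x i ^ 2 := by
          intro i; simp only [dom]; split_ifs <;> ring
        simp only [this, Finset.sum_add_distrib, ← Finset.mul_sum, ← hS]
        simp; ring
      rw [this, hs]; simp [om]; ring
  | some k =>
    cases b with
    | none =>
      have : ∑ i, dom d (some k) i x * dom d none i x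
          = -8 * x k * sF d x ^ 3 + 16 * x k * sF d x ^ 3 * (sF d x * S) := by
        have : ∀ i, dom d (some k) i x * dom d none i x =
          (if i = k then -8 * x i * sF d x ^ 3 else 0) + 16 * x k * sF d x ^ 4 * x i ^ 2 := by
          intro i; simp only [dom]; split_ifs <;> ring
        simp only [this, Finset.sum_add_distrib, ← Finset.mul_sum, ← hS]
        simp; ring
      rw [this, hs]; simp [om]; ring
    | some j =>
      have : ∑ i, dom d (some k) i x * dom d (some j) i x
          = 4 * (if k = j then 1 else 0) * sF d x ^ 2 - 16 * x k * x j * sF d x ^ 3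
            + 16 * x j * x k * sF d x ^ 3 * (sF d x * S) := by
        have : ∀ i, dom d (some k) i x * dom d (some j) i x =
          (if i = k then 4 * (if k = j then 1 else 0) * sF d x ^ 2 - 8 * x j * x k * sF d x ^ 3
             else 0)
           + (if i = j then - 8 * x j * x k * sF d x ^ 3 else 0)
           + 16 * x j * x k * sF d x ^ 4 * x i ^ 2 := by
          intro i; simp only [dom]
          by_cases h1 : i = k <;> by_cases h2 : i = j <;> by_cases h3 : k = j <;> simp_all <;> ring
        simp only [this, Finset.sum_add_distrib, ← Finset.mul_sum, ← hS]
        simp; ring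
      rw [this, hs]; simp only [om, Option.some.injEq]; split_ifs <;> ring

lemma sum_ddom (d : ℕ) (a : Option (Fin d)) (x : EuclideanSpace ℝ (Fin d)) :
    ∑ i, (uAT d x * ddom d a i i x + 2 * duF d i x * dom d a i x) =
      -(4 * d) * sF d x ^ 2 * uAT d x * om d x a := by
  have hs := sF_rel x
  set S := ∑ i, x i ^ 2 with hS
  cases a with
  | none =>
    have : ∑ i, (uAT d x * ddom d none i i x + 2 * duF d i x * dom d none i x)
        = uAT d x * (-4 * d * sF d x ^ 2 + 16 * sF d x ^ 2 * (sF d x * S)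
          + 8 * (d - 2) * sF d x ^ 2 * (sF d x * S)) := by
      have : ∀ i, uAT d x * ddom d none i i x + 2 * duF d i x * dom d none i x =
        -4 * sF d x ^ 2 * uAT d x
         + uAT d x * (16 * sF d x ^ 3 + 8 * (d - 2) * sF d x ^ 3) * x i ^ 2 := by
        intro i; simp only [dom, ddom, duF, if_true]; ring
      simp only [this, Finset.sum_add_distrib, ← Finset.mul_sum, ← hS]
      simp; ring
    rw [this, hs]; simp [om]; ring
  | some j =>
    have : ∑ i, (uAT d x * ddom d (some j) i i x + 2 * duF d i x * dom d (some j) i x)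
        = uAT d x * x j * (-4 * d * sF d x ^ 2 - 8 * sF d x ^ 2 - 4 * (d - 2) * sF d x ^ 2
          + 16 * sF d x ^ 2 * (sF d x * S)
          + 8 * (d - 2) * sF d x ^ 2 * (sF d x * S)) := by
      have : ∀ i, uAT d x * ddom d (some j) i i x + 2 * duF d i x * dom d (some j) i x =
        -4 * sF d x ^ 2 * uAT d x * x j
        + (if i = j then uAT d x * x j * (-8 * sF d x ^ 2 - 4 * (d-2) * sF d x ^ 2) else 0)
         + uAT d x * x j * (16 * sF d x ^ 3 + 8 * (d - 2) * sF d x ^ 3) * x i ^ 2 := by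
        intro i; simp only [dom, ddom, duF, if_true]
        by_cases h : i = j
        · subst h; simp; ring
        · simp [h]; ring
      simp only [this, Finset.sum_add_distrib, ← Finset.mul_sum, ← hS]
      simp; ring
    rw [this, hs]; simp [om]; ring

/-- polynomials in the stereographic coordinates -/
abbrev Pol (d : ℕ) := MvPolynomial (Option (Fin d)) ℝ

/-- value of a polynomial on the sphere -/
def evo {d : ℕ} (p : Pol d) (x : EuclideanSpace ℝ (Fin d)) : ℝ := MvPolynomial.eval (om d x) p

/-- first derivative of `evo p` -/
def devo {d : ℕ} (p : Pol d) (i : Fin d) (x : EuclideanSpace ℝ (Fin d)) : ℝ :=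
  ∑ a, evo (MvPolynomial.pderiv a p) x * dom d a i x

lemma HD_evo {d : ℕ} (p : Pol d) : HD (evo p) (devo p) := by
  induction p using MvPolynomial.induction_on with
  | C c => exact (HD.const c).congr (fun x => by simp [evo]) (fun i x => by simp [devo, evo])
  | add p q hp hq =>
    refine (hp.add hq).congr (fun x => by simp [evo]) (fun i x => ?_)
    simp [devo, evo, add_mul, Finset.sum_add_distrib]
  | mul_X p b hp =>
    refine (hp.mul (HD_om d b)).congr (fun x => by simp [evo]) (fun i x => ?_)
    simp only [devo, evo, Derivation.leibniz, smul_eq_mul, map_add, map_mul, add_mul,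
      Finset.sum_add_distrib, MvPolynomial.pderiv_X, MvPolynomial.eval_X, Finset.sum_mul]
    rw [add_comm]
    congr 1
    · exact Finset.sum_congr rfl fun a _ => by ring
    · rw [Finset.sum_eq_single b]
      · simp
      · intro a _ hab; simp [Pi.single_eq_of_ne hab.symm]
      · simp

/-- the function `u_⋆ p(ω)` -/
def Ph {d : ℕ} (p : Pol d) (x : EuclideanSpace ℝ (Fin d)) : ℝ := uAT d x * evo p x

/-- first derivatives of `Ph` -/
def dPh {d : ℕ} (p : Pol d) (i : Fin d) (x : EuclideanSpace ℝ (Fin d)) : ℝ :=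
  duF d i x * evo p x + uAT d x * devo p i x

/-- second derivatives of `Ph` -/
def ddPh {d : ℕ} (p : Pol d) (i k : Fin d) (x : EuclideanSpace ℝ (Fin d)) : ℝ :=
  (dduF d i k x * evo p x + duF d i x * devo p k x) +
  (duF d k x * devo p i x + uAT d x * ∑ a, (devo (MvPolynomial.pderiv a p) k x * dom d a i x
    + evo (MvPolynomial.pderiv a p) x * ddom d a i k x))

lemma HD_Ph {d : ℕ} (p : Pol d) : HD (Ph p) (dPh p) :=
  ((HD_uAT d).mul (HD_evo p)).congr (fun _ => rfl) (fun _ _ => rfl)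

lemma HD_dPh {d : ℕ} (p : Pol d) (i : Fin d) : HD (dPh p i) (ddPh p i) := by
  have h : HD (devo p i) _ := HD.sum Finset.univ fun a _ =>
    (HD_evo (MvPolynomial.pderiv a p)).mul (HD_dom d a i)
  exact (((HD_duF d i).mul (HD_evo p)).add ((HD_uAT d).mul h)).congr
    (fun _ => rfl) (fun _ _ => rfl)

open MvPolynomial in
/-- The operator such that `-Δ (Ph p) = (1+|x|²)⁻² Ph (Lop p)`. -/
def Lop {d : ℕ} : Pol d →ₗ[ℝ] Pol d where
  toFun p := (-4 : ℝ) • (∑ a, pderiv a (pderiv a p))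
    + (4 : ℝ) • (∑ a, X a * ∑ b, X b * pderiv b (pderiv a p))
    + (4 * d : ℝ) • (∑ a, X a * pderiv a p) + (d * (d - 2) : ℝ) • p
  map_add' p q := by
    simp only [map_add, mul_add, Finset.sum_add_distrib, smul_add]; abel
  map_smul' c p := by
    simp only [Derivation.map_smul, RingHom.id_apply, smul_add, mul_smul_comm, ← Finset.smul_sum]
    simp only [smul_comm c]

lemma Lop_apply {d : ℕ} (p : Pol d) : Lop p = (-4 : ℝ) • (∑ a, MvPolynomial.pderiv a (MvPolynomial.pderiv a p))
    + (4 : ℝ) • (∑ a, MvPolynomial.X a * ∑ b, MvPolynomial.X b * MvPolynomial.pderiv b (MvPolynomial.pderiv a p))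
    + (4 * d : ℝ) • (∑ a, MvPolynomial.X a * MvPolynomial.pderiv a p) + (d * (d - 2) : ℝ) • p := rfl

lemma evo_Lop {d : ℕ} (p : Pol d) (x : EuclideanSpace ℝ (Fin d)) :
    evo (Lop p) x = -4 * (∑ a, evo (MvPolynomial.pderiv a (MvPolynomial.pderiv a p)) x)
    + 4 * (∑ a, om d x a * ∑ b, om d x b * evo (MvPolynomial.pderiv b (MvPolynomial.pderiv a p)) x)
    + (4 * d) * (∑ a, om d x a * evo (MvPolynomial.pderiv a p) x) + (d * (d - 2)) * evo p x := by
  rw [Lop_apply]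
  simp only [evo, map_add, MvPolynomial.smul_eval, map_sum, map_mul, MvPolynomial.eval_X]

lemma lap_Ph {d : ℕ} (p : Pol d) (x : EuclideanSpace ℝ (Fin d)) :
    ∑ i, ddPh p i i x = -(sF d x ^ 2 * Ph (Lop p) x) := by
  have e1 : ∑ i, ddPh p i i x = (∑ i, dduF d i i x) * evo p x
      + ∑ a, evo (MvPolynomial.pderiv a p) x *
          ∑ i, (uAT d x * ddom d a i i x + 2 * duF d i x * dom d a i x)
      + uAT d x * ∑ a, ∑ b, evo (MvPolynomial.pderiv b (MvPolynomial.pderiv a p)) x *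
          ∑ i, dom d a i x * dom d b i x := by
    have h : ∀ i, ddPh p i i x = dduF d i i x * evo p x
      + (∑ a, evo (MvPolynomial.pderiv a p) x *
          (uAT d x * ddom d a i i x + 2 * duF d i x * dom d a i x))
      + uAT d x * ∑ a, ∑ b, evo (MvPolynomial.pderiv b (MvPolynomial.pderiv a p)) x *
          (dom d a i x * dom d b i x) := by
      intro i
      have h2 : (∑ a, evo (MvPolynomial.pderiv a p) x *
          (uAT d x * ddom d a i i x + 2 * duF d i x * dom d a i x))
          = uAT d x * (∑ a, evo (MvPolynomial.pderiv a p) x * ddom d a i i x)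
            + 2 * duF d i x * devo p i x := by
        simp only [devo, Finset.mul_sum, ← Finset.sum_add_distrib]
        exact Finset.sum_congr rfl fun a _ => by ring
      have h3 : ∑ a, ∑ b, evo (MvPolynomial.pderiv b (MvPolynomial.pderiv a p)) x *
          (dom d a i x * dom d b i x) =
          ∑ a, devo (MvPolynomial.pderiv a p) i x * dom d a i x := by
        simp only [devo, Finset.sum_mul]
        exact Finset.sum_congr rfl fun a _ => Finset.sum_congr rfl fun b _ => by ring
      rw [h2, h3]
      simp only [ddPh, Finset.sum_add_distrib]; ring
    simp only [h, Finset.sum_add_distrib, ← Finset.mul_sum, ← Finset.sum_mul]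
    congr 1
    · congr 1
      rw [Finset.sum_comm]
      refine Finset.sum_congr rfl fun a _ => ?_
      rw [← Finset.mul_sum, Finset.sum_add_distrib]
      simp only [Finset.mul_sum]
    · congr 1
      rw [Finset.sum_comm]
      refine Finset.sum_congr rfl fun a _ => ?_
      rw [Finset.sum_comm]
      refine Finset.sum_congr rfl fun b _ => ?_
      rw [← Finset.mul_sum]
  rw [e1, sum_dduF]
  simp only [sum_ddom, sum_dom_dom]
  have e2 : ∑ a, ∑ b, evo (MvPolynomial.pderiv b (MvPolynomial.pderiv a p)) x *
      (4 * sF d x ^ 2 * ((if a = b then 1 else 0) - om d x a * om d x b))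
      = 4 * sF d x ^ 2 * ((∑ a, evo (MvPolynomial.pderiv a (MvPolynomial.pderiv a p)) x)
      - ∑ a, om d x a * ∑ b, om d x b * evo (MvPolynomial.pderiv b (MvPolynomial.pderiv a p)) x) := by
    have h : ∀ a b, evo (MvPolynomial.pderiv b (MvPolynomial.pderiv a p)) x *
      (4 * sF d x ^ 2 * ((if a = b then 1 else 0) - om d x a * om d x b))
      = 4 * sF d x ^ 2 * (if a = b then evo (MvPolynomial.pderiv b (MvPolynomial.pderiv a p)) x else 0)
       - 4 * sF d x ^ 2 * (om d x a * (om d x b * evo (MvPolynomial.pderiv b (MvPolynomial.pderiv a p)) x)) := by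
      intro a b; split_ifs <;> ring
    simp only [h]
    simp only [Finset.sum_sub_distrib, ← Finset.mul_sum, mul_sub, Finset.sum_ite_eq,
      Finset.mem_univ, if_true]
  have e3 : ∑ a, evo (MvPolynomial.pderiv a p) x * (-(4 * (d:ℝ)) * sF d x ^ 2 * uAT d x * om d x a)
      = -(4 * (d:ℝ)) * sF d x ^ 2 * uAT d x * ∑ a, om d x a * evo (MvPolynomial.pderiv a p) x := by
    rw [Finset.mul_sum]; exact Finset.sum_congr rfl fun a _ => by ring
  rw [e2, e3, Ph, evo_Lop]; ring

/-- eigenvalues -/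
def lam (d n : ℕ) : ℝ := (2 * n + d) * (2 * n + d - 2)

lemma Lop_homog {d n : ℕ} {p : Pol d} (hp : p.IsHomogeneous n) :
    Lop p = lam d n • p - (4 : ℝ) • (∑ a, MvPolynomial.pderiv a (MvPolynomial.pderiv a p)) := by
  have h1 := hp.sum_X_mul_pderiv
  have h2 : (∑ a, MvPolynomial.X a * ∑ b, MvPolynomial.X b * MvPolynomial.pderiv b (MvPolynomial.pderiv a p))
      = ((n : ℝ) * (n - 1)) • p := by
    rcases n with _ | n
    · have : ∀ a, MvPolynomial.pderiv a p = 0 := by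
        intro a
        rw [MvPolynomial.totalDegree_eq_zero_iff_eq_C.1 (Nat.le_zero.1 hp.totalDegree_le)]
        simp
      simp [this]
    · have : ∀ a, ∑ b, MvPolynomial.X b * MvPolynomial.pderiv b (MvPolynomial.pderiv a p)
        = n • MvPolynomial.pderiv a p := fun a => by
        have := (hp.pderiv (i := a)).sum_X_mul_pderiv
        simpa using this
      simp only [this, mul_smul_comm, ← Finset.smul_sum, h1]
      rw [← Nat.cast_smul_eq_nsmul ℝ, ← Nat.cast_smul_eq_nsmul ℝ, smul_smul]
      congr 1; push_cast; ring
  rw [Lop_apply, h1, h2, ← Nat.cast_smul_eq_nsmul ℝ, lam]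
  simp only [smul_smul]
  module

lemma Lop_sub_mem {d n : ℕ} {p : Pol d} (hp : p.totalDegree ≤ n + 1) :
    (Lop p - lam d (n + 1) • p).totalDegree ≤ n := by
  rw [← MvPolynomial.mem_restrictTotalDegree]
  have h := p.sum_homogeneousComponent
  rw [← h, map_sum, Finset.smul_sum, ← Finset.sum_sub_distrib]
  refine Submodule.sum_mem _ fun k hk => ?_
  have hk' : k ≤ n + 1 := by have := Finset.mem_range.1 hk; omega
  have hh := p.homogeneousComponent_isHomogeneous k
  set q := MvPolynomial.homogeneousComponent k p
  rw [Lop_homog hh]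
  have hD : (4 : ℝ) • (∑ a, MvPolynomial.pderiv a (MvPolynomial.pderiv a q)) ∈
      MvPolynomial.restrictTotalDegree (Option (Fin d)) ℝ n := by
    refine Submodule.smul_mem _ _ (Submodule.sum_mem _ fun a _ => ?_)
    rw [MvPolynomial.mem_restrictTotalDegree]
    have := ((hh.pderiv (i := a)).pderiv (i := a)).totalDegree_le
    omega
  rcases Nat.lt_or_ge k (n + 1) with h1 | h1
  · have hq : q ∈ MvPolynomial.restrictTotalDegree (Option (Fin d)) ℝ n := by
      rw [MvPolynomial.mem_restrictTotalDegree]; have := hh.totalDegree_le; omega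
    exact Submodule.sub_mem _ (Submodule.sub_mem _ (Submodule.smul_mem _ _ hq) hD)
      (Submodule.smul_mem _ _ hq)
  · obtain rfl : k = n + 1 := le_antisymm hk' h1
    have : lam d (n + 1) • q - (4 : ℝ) • (∑ a, MvPolynomial.pderiv a (MvPolynomial.pderiv a q))
      - lam d (n + 1) • q = -((4 : ℝ) • (∑ a, MvPolynomial.pderiv a (MvPolynomial.pderiv a q))) := by abel
    rw [this]; exact Submodule.neg_mem _ hD

lemma Lop_deg {d n : ℕ} {p : Pol d} (hp : p.totalDegree ≤ n) : (Lop p).totalDegree ≤ n := by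
  rcases n with _ | n
  · have h0 := MvPolynomial.totalDegree_eq_zero_iff_eq_C.1 (Nat.le_zero.1 hp)
    rw [h0, Lop_apply]
    simp only [MvPolynomial.pderiv_C, map_zero, mul_zero, Finset.sum_const_zero, smul_zero, zero_add]
    refine (MvPolynomial.totalDegree_smul_le _ _).trans ?_
    simp
  · have h := Lop_sub_mem hp
    have : Lop p = (Lop p - lam d (n + 1) • p) + lam d (n + 1) • p := by abel
    rw [this]
    refine (MvPolynomial.totalDegree_add _ _).trans (max_le (by omega) ?_)
    exact (MvPolynomial.totalDegree_smul_le _ _).trans hp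

/-- `g = O((1+|x|²)^m)` -/
def Bd {d : ℕ} (g : EuclideanSpace ℝ (Fin d) → ℝ) (m : ℝ) : Prop :=
  ∃ C : ℝ, 0 ≤ C ∧ ∀ x, |g x| ≤ C * (1 + ‖x‖ ^ 2) ^ m

section BdSec
variable {d : ℕ} {f g : EuclideanSpace ℝ (Fin d) → ℝ} {m m₁ m₂ : ℝ}

lemma Bd.mono (h : Bd f m₁) (hm : m₁ ≤ m) : Bd f m := by
  obtain ⟨C, hC, h⟩ := h
  exact ⟨C, hC, fun x => (h x).trans
    (mul_le_mul_of_nonneg_left (rpow_le_rpow_of_exponent_le (rho_one x) hm) hC)⟩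

lemma Bd.mul (hf : Bd f m₁) (hg : Bd g m₂) (hm : m₁ + m₂ ≤ m) : Bd (fun x => f x * g x) m := by
  refine Bd.mono ?_ hm
  obtain ⟨C, hC, hf⟩ := hf
  obtain ⟨D, hD, hg⟩ := hg
  refine ⟨C * D, by positivity, fun x => ?_⟩
  rw [abs_mul, rpow_add (rho_pos x)]
  calc _ ≤ (C * (1 + ‖x‖ ^ 2) ^ m₁) * (D * (1 + ‖x‖ ^ 2) ^ m₂) :=
        mul_le_mul (hf x) (hg x) (abs_nonneg _) ((abs_nonneg _).trans (hf x))
    _ = _ := by ring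

lemma Bd.add (hf : Bd f m) (hg : Bd g m) : Bd (fun x => f x + g x) m := by
  obtain ⟨C, hC, hf⟩ := hf
  obtain ⟨D, hD, hg⟩ := hg
  exact ⟨C + D, by positivity, fun x => (abs_add_le _ _).trans (by linarith [hf x, hg x])⟩

lemma Bd.const (c : ℝ) (hm : 0 ≤ m) : Bd (fun _ : EuclideanSpace ℝ (Fin d) => c) m := by
  refine Bd.mono (m₁ := 0) ⟨|c|, abs_nonneg c, fun x => ?_⟩ hm
  simp

lemma Bd.const_mul (c : ℝ) (hf : Bd f m) : Bd (fun x => c * f x) m :=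
  (Bd.const c le_rfl).mul hf (by simp)

lemma Bd.neg (hf : Bd f m) : Bd (fun x => - f x) m := by
  obtain ⟨C, hC, hf⟩ := hf
  exact ⟨C, hC, fun x => by rw [abs_neg]; exact hf x⟩

lemma Bd.sub (hf : Bd f m) (hg : Bd g m) : Bd (fun x => f x - g x) m := by
  simpa [sub_eq_add_neg] using hf.add hg.neg

lemma Bd.sum {ι : Type*} (s : Finset ι) {F : ι → EuclideanSpace ℝ (Fin d) → ℝ}
    (h : ∀ a ∈ s, Bd (F a) m) : Bd (fun x => ∑ a ∈ s, F a x) m := by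
  classical
  induction s using Finset.induction_on with
  | empty => exact ⟨0, le_rfl, fun x => by simp⟩
  | insert a s ha ih =>
    simp only [Finset.sum_insert ha]
    exact (h a (Finset.mem_insert_self a s)).add
      (ih fun b hb => h b (Finset.mem_insert_of_mem hb))

lemma Bd_coord (j : Fin d) : Bd (fun x : EuclideanSpace ℝ (Fin d) => x j) (1 / 2) := by
  refine ⟨1, zero_le_one, fun x => ?_⟩
  rw [one_mul, ← sqrt_eq_rpow]
  apply le_sqrt_of_sq_le
  rw [sq_abs, EuclideanSpace.real_norm_sq_eq]
  have := Finset.single_le_sum (f := fun i => x i ^ 2) (fun i _ => sq_nonneg _) (Finset.mem_univ j)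
  simp only at this
  linarith

lemma Bd_sF : Bd (sF d) (-1) := by
  refine ⟨1, zero_le_one, fun x => ?_⟩
  rw [abs_of_pos (sF_pos x), rpow_neg_one, one_mul]; rfl

lemma Bd_uAT : Bd (uAT d) (-(((d : ℝ) - 2) / 2)) := by
  refine ⟨1, zero_le_one, fun x => ?_⟩
  rw [abs_of_pos (uAT_pos x), one_mul]; rfl

lemma Bd.aff (hf : Bd f m) (hm : m ≤ 0) {c : ℝ} (hc : 0 < c) (x₀ : EuclideanSpace ℝ (Fin d)) :
    Bd (fun x => f (c • (x - x₀))) m := by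
  obtain ⟨C, hC, hf⟩ := hf
  set A : ℝ := 2 * (1 / c ^ 2 + 1 + ‖x₀‖ ^ 2) with hA
  have hApos : 0 < A := by positivity
  refine ⟨C * (A⁻¹) ^ m, by positivity, fun x => (hf _).trans ?_⟩
  rw [mul_assoc, ← mul_rpow (by positivity) (by positivity)]
  refine mul_le_mul_of_nonneg_left (rpow_le_rpow_of_nonpos (by positivity) ?_ hm) hC
  rw [inv_mul_le_iff₀ hApos, norm_smul, mul_pow, norm_eq_abs, sq_abs]
  have h1 : ‖x‖ ≤ ‖x - x₀‖ + ‖x₀‖ := by simpa using norm_add_le (x - x₀) x₀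
  have h2 : ‖x‖ ^ 2 ≤ 2 * ‖x - x₀‖ ^ 2 + 2 * ‖x₀‖ ^ 2 := by
    nlinarith [sq_nonneg (‖x - x₀‖ - ‖x₀‖), norm_nonneg x]
  have h3 : A * (c ^ 2 * ‖x - x₀‖ ^ 2) ≥ 2 * ‖x - x₀‖ ^ 2 := by
    have : A * c ^ 2 ≥ 2 := by
      rw [hA]; have : 1 / c ^ 2 * c ^ 2 = 1 := by field_simp
      nlinarith [sq_nonneg c, mul_nonneg (sq_nonneg c) (sq_nonneg ‖x₀‖)]
    nlinarith [sq_nonneg ‖x - x₀‖]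
  have h4 : A ≥ 2 + 2 * ‖x₀‖ ^ 2 := by
    rw [hA]; have : 0 < 1 / c ^ 2 := by positivity
    linarith
  nlinarith

lemma integrable_rho {r : ℝ} (h : 2 * r < -(d : ℝ)) :
    Integrable (fun x : EuclideanSpace ℝ (Fin d) => (1 + ‖x‖ ^ 2) ^ r) := by
  have := integrable_rpow_neg_one_add_norm_sq (E := EuclideanSpace ℝ (Fin d)) (μ := volume)
    (r := -(2 * r)) (by simp; linarith)
  convert this using 3
  ring

lemma continuous_rho (r : ℝ) :
    Continuous (fun x : EuclideanSpace ℝ (Fin d) => (1 + ‖x‖ ^ 2) ^ r) :=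
  Continuous.rpow_const (by fun_prop) (fun x => Or.inl (rho_pos x).ne')

lemma Bd.integrable (hf : Bd f m) (hc : Continuous f) (h : 2 * m < -(d : ℝ)) : Integrable f := by
  obtain ⟨C, hC, hf⟩ := hf
  exact ((integrable_rho h).const_mul C).mono' hc.aestronglyMeasurable
    (Filter.Eventually.of_forall hf)

end BdSec

section BdPh
variable {d : ℕ}

lemma Bd_rpowhalf {m : ℝ} (hm : -1/2 ≤ m) : Bd (fun x => (1 + ‖x‖ ^ 2) ^ (-1 / 2 : ℝ) : EuclideanSpace ℝ (Fin d) → ℝ) m :=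
  Bd.mono ⟨1, zero_le_one, fun x => by
    rw [one_mul, abs_of_pos (rpow_pos_of_pos (rho_pos x) _)]⟩ hm

lemma Bd_sF2 : Bd (fun x => sF d x ^ 2) (-2) := by
  simp only [sq]; exact Bd_sF.mul Bd_sF (by norm_num)

lemma Bd_sF3 : Bd (fun x => sF d x ^ 3) (-3) := by
  have : (fun x => sF d x ^ 3) = fun x => sF d x ^ 2 * sF d x := by ext; ring
  rw [this]; exact Bd_sF2.mul Bd_sF (by norm_num)

lemma Bd_om (a : Option (Fin d)) : Bd (fun x => om d x a) 0 := by
  cases a with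
  | none => exact ((Bd_sF.const_mul 2).mono (by norm_num)).sub (Bd.const 1 le_rfl)
  | some j => exact ((Bd_coord j).const_mul 2).mul Bd_sF (by norm_num)

lemma Bd_evo (p : Pol d) : Bd (evo p) 0 := by
  induction p using MvPolynomial.induction_on with
  | C c => simpa [evo, Bd] using (Bd.const (d := d) c le_rfl)
  | add p q hp hq =>
    have : evo (p + q) = fun x => evo p x + evo q x := by ext; simp [evo]
    rw [this]; exact hp.add hq
  | mul_X p b hp =>
    have : evo (p * MvPolynomial.X b) = fun x => evo p x * om d x b := by ext; simp [evo]
    rw [this]; exact hp.mul (Bd_om b) (by norm_num)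

lemma Bd_dom (a : Option (Fin d)) (i : Fin d) : Bd (dom d a i) (-1) := by
  cases a with
  | none => exact ((Bd_coord i).const_mul (-4)).mul Bd_sF2 (by norm_num)
  | some j =>
    exact ((Bd_sF.const_mul (2 * (if i = j then 1 else 0)))).sub
      ((((Bd_coord i).const_mul 4).mul (Bd_coord j) le_rfl).mul Bd_sF2 (by norm_num))

lemma Bd_ddom (a : Option (Fin d)) (i k : Fin d) : Bd (ddom d a i k) (-1) := by
  cases a with
  | none =>
    exact ((Bd_sF2.const_mul (-4 * (if k = i then 1 else 0))).mono (by norm_num)).add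
      ((((Bd_coord i).const_mul 16).mul (Bd_coord k) le_rfl).mul Bd_sF3 (by norm_num))
  | some j =>
    refine Bd.add (Bd.sub ?_ ?_) ?_
    · exact ((Bd_coord k).const_mul (-4 * (if i = j then 1 else 0))).mul Bd_sF2 (by norm_num)
    · refine Bd.mul (m₁ := 1/2) (Bd.const_mul _ (Bd.add ?_ ?_)) Bd_sF2 (by norm_num)
      · exact (Bd_coord j).const_mul _
      · exact (Bd_coord i).mul (Bd.const _ le_rfl) (by norm_num)
    · exact ((((Bd_coord i).const_mul 16).mul (Bd_coord j) le_rfl).mul (Bd_coord k) le_rfl).mul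
        Bd_sF3 (by norm_num)

lemma Bd_duF (i : Fin d) : Bd (duF d i) (-(((d : ℝ) - 1) / 2)) :=
  (((Bd_coord i).const_mul (-((d : ℝ) - 2))).mul Bd_sF le_rfl).mul Bd_uAT (by linarith)

lemma Bd_dduF (i k : Fin d) : Bd (dduF d i k) (-((d : ℝ) / 2)) := by
  refine Bd.const_mul _ (Bd.sub ?_ ?_)
  · exact (Bd_sF.const_mul _).mul Bd_uAT (by linarith)
  · exact ((((Bd_coord i).const_mul _).mul (Bd_coord k) le_rfl).mul Bd_sF2 le_rfl).mul Bd_uAT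
      (by linarith)

lemma Bd_devo (p : Pol d) (i : Fin d) : Bd (devo p i) (-1) :=
  Bd.sum _ fun a _ => (Bd_evo _).mul (Bd_dom a i) (by norm_num)

lemma Bd_Ph (p : Pol d) : Bd (Ph p) (-(((d : ℝ) - 2) / 2)) :=
  Bd_uAT.mul (Bd_evo p) (by simp)

lemma Bd_dPh (p : Pol d) (i : Fin d) : Bd (dPh p i) (-(((d : ℝ) - 1) / 2)) :=
  ((Bd_duF i).mul (Bd_evo p) (by simp)).add (Bd_uAT.mul (Bd_devo p i) (by linarith))

lemma Bd_ddPh (p : Pol d) (i k : Fin d) : Bd (ddPh p i k) (-((d : ℝ) / 2)) := by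
  refine Bd.add (Bd.add ?_ ?_) (Bd.add ?_ ?_)
  · exact (Bd_dduF i k).mul (Bd_evo p) (by simp)
  · exact (Bd_duF i).mul (Bd_devo p k) (by linarith)
  · exact (Bd_duF k).mul (Bd_devo p i) (by linarith)
  · refine Bd_uAT.mul (m₂ := -1) (Bd.sum _ fun a _ => Bd.add ?_ ?_) (by linarith)
    · exact (Bd_devo _ k).mul (Bd_dom a i) (by norm_num)
    · exact (Bd_evo _).mul (Bd_ddom a i k) (by norm_num)

lemma continuous_ddPh (p : Pol d) (i k : Fin d) : Continuous (ddPh p i k) := by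
  have h1 := fun q : Pol d => (HD_evo q).continuous
  have h2 := fun (q : Pol d) i => (Continuous.congr (f := fun x => ∑ a, evo (MvPolynomial.pderiv a q) x * dom d a i x)
    (continuous_finsetSum _ fun a _ => (h1 _).mul (HD_dom d a i).continuous) (fun _ => rfl) : Continuous (devo q i))
  have hc : ∀ i : Fin d, Continuous fun x : EuclideanSpace ℝ (Fin d) => x i := fun i => (HD.coord i).continuous
  have h3 := (HD_sF d).continuous
  have h4 := (HD_uAT d).continuous
  have h5 := fun i => (HD_duF d i).continuous
  have h6 := fun a i => (HD_dom d a i).continuous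
  have h7 : ∀ a i k, Continuous (ddom d a i k) := by
    intro a i k
    have hi := hc i
    have hk := hc k
    cases a with
    | none => unfold ddom; fun_prop
    | some j => have hj := hc j; unfold ddom; fun_prop
  have h8 : Continuous (dduF d i k) := by
    have hi := hc i
    have hk := hc k
    unfold dduF; fun_prop
  unfold ddPh
  fun_prop

end BdPh

lemma integral_partial_zero {d : ℕ} {h h' : EuclideanSpace ℝ (Fin d) → ℝ} {i : Fin d}
    (hh : ∀ x, HasLineDerivAt ℝ h (h' x) x (EuclideanSpace.single i 1))
    (hi : Integrable h')
    (hw : Integrable (fun x => h x * (1 + ‖x‖ ^ 2) ^ (-1 / 2 : ℝ))) : ∫ x, h' x = 0 := by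
  set c : ℕ → ℝ := fun n => 1 / ((n : ℝ) + 1) with hc
  have hc0 : ∀ n, 0 < c n := fun n => by positivity
  have hc1 : ∀ n, c n ≤ 1 := fun n => by
    rw [hc]; simp only; rw [div_le_one (by positivity)]; linarith [n.cast_nonneg (α := ℝ)]
  have hclim : Filter.Tendsto c Filter.atTop (nhds 0) := tendsto_one_div_add_atTop_nhds_zero_nat
  set χ : ℕ → EuclideanSpace ℝ (Fin d) → ℝ := fun n x => sF d (c n • (x - 0)) with hχ
  set χ' : ℕ → EuclideanSpace ℝ (Fin d) → ℝ := fun n x =>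
    c n * (-2 * (c n • (x - 0)) i * sF d (c n • (x - 0)) ^ 2) with hχ'
  have hHD : ∀ n x, HasLineDerivAt ℝ (χ n) (χ' n x) x (EuclideanSpace.single i 1) := fun n x =>
    ((HD_sF d).aff (c n) 0).hasLine i x
  have hχc : ∀ n, Continuous (χ n) := fun n => ((HD_sF d).aff (c n) 0).continuous
  have hχ'c : ∀ n, Continuous (χ' n) := fun n => by
    have := (HD_sF d).continuous
    have h2 := (HD.coord (d := d) i).continuous
    rw [hχ']; fun_prop
  have hχ1 : ∀ n x, |χ n x| ≤ 1 := fun n x => by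
    rw [hχ]; simp only; rw [abs_of_pos (sF_pos _)]
    exact inv_le_one_of_one_le₀ (rho_one _)
  have hr2 : ∀ x : EuclideanSpace ℝ (Fin d), (1 + ‖x‖ ^ 2) ^ (1 / 2 : ℝ) = √(1 + ‖x‖ ^ 2) :=
    fun x => (sqrt_eq_rpow _).symm
  have hcancel : ∀ x : EuclideanSpace ℝ (Fin d),
      (1 + ‖x‖ ^ 2) ^ (-1 / 2 : ℝ) * (1 + ‖x‖ ^ 2) ^ (1 / 2 : ℝ) = 1 := fun x => by
    rw [← rpow_add (rho_pos x)]; norm_num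
  -- bound on the derivative
  have hχ'b : ∀ n x, |χ' n x| * (1 + ‖x‖ ^ 2) ^ (1 / 2 : ℝ) ≤ 2 := fun n x => by
    have hxi : |x i| ≤ √(1 + ‖x‖ ^ 2) := by
      obtain ⟨C, _, _⟩ := Bd_coord (d := d) i
      apply le_sqrt_of_sq_le
      rw [sq_abs, EuclideanSpace.real_norm_sq_eq]
      have := Finset.single_le_sum (f := fun i => x i ^ 2) (fun i _ => sq_nonneg _)
        (Finset.mem_univ i)
      simp only at this
      linarith
    set s := sF d (c n • (x - 0)) with hs
    have hs0 : 0 < s := sF_pos _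
    have hs1 : s ≤ 1 := inv_le_one_of_one_le₀ (rho_one _)
    have e : |χ' n x| = 2 * c n ^ 2 * |x i| * s ^ 2 := by
      have e1 : χ' n x = c n * (-2 * (c n * x i) * s ^ 2) := by
        simp [hχ', hs]
      rw [e1, abs_mul, abs_mul, abs_mul, abs_mul, abs_pow, abs_of_pos hs0, abs_of_pos (hc0 n)]
      norm_num; ring
    rw [e, hr2]
    have h1 : c n ^ 2 * (1 + ‖x‖ ^ 2) * s ≤ 1 := by
      rw [hs, sF, sub_zero, norm_smul, norm_eq_abs, mul_pow, sq_abs, mul_inv_le_iff₀ (by positivity)]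
      nlinarith [hc0 n, hc1 n]
    have h2 : √(1 + ‖x‖ ^ 2) * √(1 + ‖x‖ ^ 2) = 1 + ‖x‖ ^ 2 := mul_self_sqrt (rho_pos x).le
    calc 2 * c n ^ 2 * |x i| * s ^ 2 * √(1 + ‖x‖ ^ 2)
        ≤ 2 * c n ^ 2 * √(1 + ‖x‖ ^ 2) * s ^ 2 * √(1 + ‖x‖ ^ 2) := by gcongr
      _ = 2 * (c n ^ 2 * (√(1 + ‖x‖ ^ 2) * √(1 + ‖x‖ ^ 2)) * s) * s := by ring
      _ = 2 * (c n ^ 2 * (1 + ‖x‖ ^ 2) * s) * s := by rw [h2]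
      _ ≤ 2 * 1 * 1 := by gcongr
      _ = 2 := by norm_num
  have hb : ∀ n x, |h x * χ' n x| ≤ 2 * |h x * (1 + ‖x‖ ^ 2) ^ (-1 / 2 : ℝ)| := fun n x => by
    have hp : 0 < (1 + ‖x‖ ^ 2) ^ (-1 / 2 : ℝ) := rpow_pos_of_pos (rho_pos x) _
    rw [abs_mul (h x) (χ' n x), abs_mul (h x) ((1 + ‖x‖ ^ 2) ^ (-1 / 2 : ℝ)), abs_of_pos hp]
    have : |χ' n x| ≤ 2 * (1 + ‖x‖ ^ 2) ^ (-1 / 2 : ℝ) := by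
      calc |χ' n x| = (|χ' n x| * (1 + ‖x‖ ^ 2) ^ (1 / 2 : ℝ)) * (1 + ‖x‖ ^ 2) ^ (-1 / 2 : ℝ) := by
            rw [mul_assoc, mul_comm ((1 + ‖x‖ ^ 2) ^ (1 / 2 : ℝ)), hcancel, mul_one]
        _ ≤ _ := mul_le_mul_of_nonneg_right (hχ'b n x) hp.le
    nlinarith [abs_nonneg (h x)]
  have hhm : AEStronglyMeasurable h volume := by
    have : h = fun x => (h x * (1 + ‖x‖ ^ 2) ^ (-1 / 2 : ℝ)) * (1 + ‖x‖ ^ 2) ^ (1 / 2 : ℝ) := by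
      ext x; rw [mul_assoc, hcancel, mul_one]
    rw [this]
    exact hw.aestronglyMeasurable.mul (continuous_rho _).aestronglyMeasurable
  have key : ∀ n, ∫ x, h x * χ' n x = - ∫ x, h' x * χ n x := fun n => by
    have := integral_bilinear_hasLineDerivAt_right_eq_neg_left_of_integrable (μ := volume)
      (f := h) (f' := h') (g := χ n) (g' := χ' n) (v := EuclideanSpace.single i 1)
      (B := ContinuousLinearMap.mul ℝ ℝ) ?_ ?_ ?_ (fun x _ => hh x) (fun x _ => hHD n x)
    · simpa using this
    · simp only [ContinuousLinearMap.mul_apply']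
      exact hi.norm.mono' (hi.aestronglyMeasurable.mul (hχc n).aestronglyMeasurable)
        (Filter.Eventually.of_forall fun x => by
          rw [norm_mul, norm_eq_abs (χ n x)]
          exact mul_le_of_le_one_right (norm_nonneg _) (hχ1 n x))
    · simp only [ContinuousLinearMap.mul_apply']
      exact (hw.norm.const_mul 2).mono' (hhm.mul (hχ'c n).aestronglyMeasurable)
        (Filter.Eventually.of_forall fun x => hb n x)
    · simp only [ContinuousLinearMap.mul_apply']
      obtain ⟨C, hC, hCb⟩ := (Bd_sF (d := d)).aff (by norm_num) (hc0 n) 0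
      refine (hw.norm.const_mul C).mono' (hhm.mul (hχc n).aestronglyMeasurable)
        (Filter.Eventually.of_forall fun x => ?_)
      have hp : 0 < (1 + ‖x‖ ^ 2) ^ (-1 / 2 : ℝ) := rpow_pos_of_pos (rho_pos x) _
      rw [norm_mul, norm_mul, norm_eq_abs, norm_eq_abs, norm_eq_abs, abs_of_pos hp]
      have h1 : |χ n x| ≤ C * (1 + ‖x‖ ^ 2) ^ (-1 / 2 : ℝ) := (hCb x).trans
        (mul_le_mul_of_nonneg_left (rpow_le_rpow_of_exponent_le (rho_one x) (by norm_num)) hC)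
      nlinarith [abs_nonneg (h x)]
  have lim1 : Filter.Tendsto (fun n => ∫ x, h x * χ' n x) Filter.atTop
      (nhds (∫ x : EuclideanSpace ℝ (Fin d), (0 : ℝ))) := by
    refine tendsto_integral_of_dominated_convergence
      (fun x => 2 * |h x * (1 + ‖x‖ ^ 2) ^ (-1 / 2 : ℝ)|)
      (fun n => hhm.mul (hχ'c n).aestronglyMeasurable) (hw.norm.const_mul 2)
      (fun n => Filter.Eventually.of_forall fun x => hb n x)
      (Filter.Eventually.of_forall fun x => ?_)
    have h1 : Continuous fun t : ℝ => h x * (t * (-2 * (t • (x - 0)) i * sF d (t • (x - 0)) ^ 2)) := by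
      have := (HD_sF d).continuous
      have h2 := (HD.coord (d := d) i).continuous
      fun_prop
    have := (h1.tendsto 0).comp hclim
    have e0 : h x * (0 * (-2 * ((0 : ℝ) • (x - 0)) i * sF d ((0 : ℝ) • (x - 0)) ^ 2)) = 0 := by ring
    rw [e0] at this
    exact this
  have lim2 : Filter.Tendsto (fun n => ∫ x, h' x * χ n x) Filter.atTop (nhds (∫ x, h' x)) := by
    refine tendsto_integral_of_dominated_convergence
      (fun x => ‖h' x‖)
      (fun n => hi.aestronglyMeasurable.mul (hχc n).aestronglyMeasurable) hi.norm
      (fun n => Filter.Eventually.of_forall fun x => ?_)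
      (Filter.Eventually.of_forall fun x => ?_)
    · rw [norm_mul, norm_eq_abs (χ n x)]
      exact mul_le_of_le_one_right (norm_nonneg _) (hχ1 n x)
    have h1 : Continuous fun t : ℝ => h' x * sF d (t • (x - 0)) := by
      have := (HD_sF d).continuous
      fun_prop
    have := (h1.tendsto 0).comp hclim
    have e0 : h' x * sF d ((0 : ℝ) • (x - 0)) = h' x := by simp [sF]
    rw [e0] at this
    exact this
  simp only [key] at lim1
  have := tendsto_nhds_unique lim1 lim2.neg
  simpa using this.symm

/-- partial derivatives -/
def pd {d : ℕ} (f : EuclideanSpace ℝ (Fin d) → ℝ) (i : Fin d) (x : EuclideanSpace ℝ (Fin d)) : ℝ :=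
  fderiv ℝ f x (EuclideanSpace.single i 1)

/-- the class of functions we work with -/
def VV {d : ℕ} (f : EuclideanSpace ℝ (Fin d) → ℝ) : Prop :=
  Differentiable ℝ f ∧ (∀ i, Integrable (fun x => pd f i x ^ 2)) ∧
  Integrable (fun x => |f x| ^ (2 * (d : ℝ) / ((d : ℝ) - 2))) ∧
  Integrable (fun x => f x * f x * sF d x ^ 2)

section VSec
variable {d : ℕ} {f g : EuclideanSpace ℝ (Fin d) → ℝ}

lemma VV.HD (h : VV f) : HD f (pd f) := ⟨h.1, fun _ _ => rfl⟩

lemma continuous_sF : Continuous (sF d) := (HD_sF d).continuous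

lemma VV.continuous (h : VV f) : Continuous f := h.1.continuous

lemma measurable_pd (f : EuclideanSpace ℝ (Fin d) → ℝ) (i : Fin d) : Measurable (pd f i) :=
  measurable_fderiv_apply_const ℝ f _

lemma integrable_mul_of_sq {α : Type*} [MeasurableSpace α] {μ : Measure α} {a b : α → ℝ}
    (ha : Integrable (fun x => a x ^ 2) μ)
    (hb : Integrable (fun x => b x ^ 2) μ) (ham : AEStronglyMeasurable a μ)
    (hbm : AEStronglyMeasurable b μ) : Integrable (fun x => a x * b x) μ := by
  refine (ha.add hb).mono' (ham.mul hbm) (Filter.Eventually.of_forall fun x => ?_)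
  rw [norm_eq_abs, abs_mul]
  simp only [Pi.add_apply]
  nlinarith [sq_nonneg (|a x| - |b x|), sq_abs (a x), sq_abs (b x), sq_nonneg (a x), sq_nonneg (b x)]

lemma integrable_I' {f g : EuclideanSpace ℝ (Fin d) → ℝ}
    (hf : Integrable (fun x => f x * f x * sF d x ^ 2))
    (hg : Integrable (fun x => g x * g x * sF d x ^ 2)) (cf : Continuous f) (cg : Continuous g) :
    Integrable (fun x => f x * g x * sF d x ^ 2) := by
  have := integrable_mul_of_sq (μ := volume) (a := fun x => f x * sF d x) (b := fun x => g x * sF d x)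
    (hf.congr (Filter.Eventually.of_forall fun x => by ring))
    (hg.congr (Filter.Eventually.of_forall fun x => by ring))
    (cf.mul continuous_sF).aestronglyMeasurable (cg.mul continuous_sF).aestronglyMeasurable
  exact this.congr (Filter.Eventually.of_forall fun x => by ring)

lemma VV.integrable_I (hf : VV f) (hg : VV g) : Integrable (fun x => f x * g x * sF d x ^ 2) :=
  integrable_I' hf.2.2.2 hg.2.2.2 hf.continuous hg.continuous

lemma VV.integrable_D (hf : VV f) (hg : VV g) : Integrable (fun x => ∑ i, pd f i x * pd g i x) :=
  integrable_finsetSum _ fun i _ => integrable_mul_of_sq (hf.2.1 i) (hg.2.1 i)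
    (measurable_pd f i).aestronglyMeasurable (measurable_pd g i).aestronglyMeasurable

lemma pd_sub (hf : Differentiable ℝ f) (hg : Differentiable ℝ g) (i : Fin d)
    (x : EuclideanSpace ℝ (Fin d)) : pd (fun x => f x - g x) i x = pd f i x - pd g i x := by
  simp [pd, fderiv_fun_sub (hf x) (hg x)]

lemma VV.sub (hd : 3 ≤ d) (hf : VV f) (hg : VV g) : VV (fun x => f x - g x) := by
  have hd' : (3 : ℝ) ≤ d := by exact_mod_cast hd
  refine ⟨hf.1.sub hg.1, fun i => ?_, ?_, ?_⟩
  · have := ((hf.2.1 i).add (hg.2.1 i)).sub ((integrable_mul_of_sq (hf.2.1 i) (hg.2.1 i)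
      (measurable_pd f i).aestronglyMeasurable (measurable_pd g i).aestronglyMeasurable).const_mul 2)
    refine this.congr (Filter.Eventually.of_forall fun x => ?_)
    simp only [Pi.sub_apply, Pi.add_apply, pd_sub hf.1 hg.1]; ring
  · set p := 2 * (d : ℝ) / ((d : ℝ) - 2) with hp
    have hp0 : 0 ≤ p := div_nonneg (by positivity) (by linarith)
    refine ((hf.2.2.1.add hg.2.2.1).const_mul (2 ^ p)).mono' ?_
      (Filter.Eventually.of_forall fun x => ?_)
    · exact (Continuous.rpow_const ((hf.continuous.sub hg.continuous).abs)
        (fun x => Or.inr hp0)).aestronglyMeasurable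
    · rw [norm_eq_abs, abs_of_nonneg (rpow_nonneg (abs_nonneg _) _)]
      simp only [Pi.add_apply]
      have hab := abs_sub (f x) (g x)
      have h1 : 0 ≤ |f x| ^ p := rpow_nonneg (abs_nonneg _) _
      have h2 : 0 ≤ |g x| ^ p := rpow_nonneg (abs_nonneg _) _
      have h3 : (0:ℝ) ≤ 2 ^ p := by positivity
      rcases le_total (|f x|) (|g x|) with h | h
      · calc |f x - g x| ^ p ≤ (2 * |g x|) ^ p := by gcongr; linarith
          _ = 2 ^ p * |g x| ^ p := mul_rpow (by norm_num) (abs_nonneg _)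
          _ ≤ _ := by gcongr; linarith
      · calc |f x - g x| ^ p ≤ (2 * |f x|) ^ p := by gcongr; linarith
          _ = 2 ^ p * |f x| ^ p := mul_rpow (by norm_num) (abs_nonneg _)
          _ ≤ _ := by gcongr; linarith
  · have := (hf.2.2.2.add hg.2.2.2).sub ((hf.integrable_I hg).const_mul 2)
    refine this.congr (Filter.Eventually.of_forall fun x => ?_)
    simp only [Pi.sub_apply, Pi.add_apply]; ring

lemma continuous_Ph (p : Pol d) : Continuous (Ph p) := (HD_Ph p).continuous
lemma continuous_dPh (p : Pol d) (i : Fin d) : Continuous (dPh p i) := (HD_dPh p i).continuous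

lemma pd_Ph (p : Pol d) (i : Fin d) (x) : pd (Ph p) i x = dPh p i x := (HD_Ph p).2 i x

lemma VV_Ph (hd : 3 ≤ d) (p : Pol d) : VV (Ph p) := by
  have hd' : (3 : ℝ) ≤ d := by exact_mod_cast hd
  refine ⟨(HD_Ph p).1, fun i => ?_, ?_, ?_⟩
  · simp only [pd_Ph, sq]
    exact Bd.integrable ((Bd_dPh p i).mul (Bd_dPh p i) le_rfl)
      ((continuous_dPh p i).mul (continuous_dPh p i)) (by linarith)
  · obtain ⟨C, hC, h⟩ := Bd_Ph p
    have hp0 : 0 ≤ 2 * (d : ℝ) / ((d : ℝ) - 2) := div_nonneg (by positivity) (by linarith)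
    refine Bd.integrable (m := -d) ⟨C ^ (2 * (d : ℝ) / ((d : ℝ) - 2)), by positivity, fun x => ?_⟩
      (Continuous.rpow_const (continuous_Ph p).abs (fun x => Or.inr hp0)) (by linarith)
    rw [abs_of_nonneg (rpow_nonneg (abs_nonneg _) _)]
    refine (rpow_le_rpow (abs_nonneg _) (h x) hp0).trans (le_of_eq ?_)
    rw [mul_rpow hC (rpow_nonneg (rho_pos x).le _), ← rpow_mul (rho_pos x).le]
    congr 2
    have : (d : ℝ) - 2 ≠ 0 := by linarith
    field_simp
  · exact Bd.integrable (((Bd_Ph p).mul (Bd_Ph p) le_rfl).mul Bd_sF2 le_rfl)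
      (((continuous_Ph p).mul (continuous_Ph p)).mul (continuous_sF.pow 2)) (by linarith)

lemma VV.integrable_mul_Bd (hd : 3 ≤ d) (hf : VV f) (hg : Bd g (-((d : ℝ) / 2)))
    (cg : Continuous g) : Integrable (fun x => f x * g x) := by
  have hd' : (3 : ℝ) ≤ d := by exact_mod_cast hd
  set p := 2 * (d : ℝ) / ((d : ℝ) - 2) with hp
  set q := 2 * (d : ℝ) / ((d : ℝ) + 2) with hq
  have hp0 : 0 < p := div_pos (by positivity) (by linarith)
  have hq0 : 0 < q := by positivity
  have hpq : p.HolderConjugate q := by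
    rw [Real.holderConjugate_iff]
    have : (d : ℝ) - 2 ≠ 0 := by linarith
    refine ⟨?_, ?_⟩
    · rw [hp, lt_div_iff₀ (by linarith)]; linarith
    · rw [hp, hq]; field_simp; ring
  have hq1 : 1 < q := by rw [hq, lt_div_iff₀ (by linarith)]; linarith
  obtain ⟨C, hC, h⟩ := hg
  have hgi : Integrable (fun x => |g x| ^ q) := by
    refine Bd.integrable (m := -((d : ℝ) / 2) * q) ⟨C ^ q, by positivity, fun x => ?_⟩
      (Continuous.rpow_const cg.abs (fun x => Or.inr hq0.le)) (by nlinarith)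
    rw [abs_of_nonneg (rpow_nonneg (abs_nonneg _) _)]
    refine (rpow_le_rpow (abs_nonneg _) (h x) hq0.le).trans (le_of_eq ?_)
    rw [mul_rpow hC (rpow_nonneg (rho_pos x).le _), ← rpow_mul (rho_pos x).le]
  refine ((hf.2.2.1.div_const p).add (hgi.div_const q)).mono'
    (hf.continuous.mul cg).aestronglyMeasurable (Filter.Eventually.of_forall fun x => ?_)
  rw [norm_mul]
  exact young_inequality_of_nonneg (abs_nonneg _) (abs_nonneg _) hpq

lemma formD (hd : 3 ≤ d) (hf : VV f) (p : Pol d) :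
    ∫ x, ∑ i, pd f i x * pd (Ph p) i x = ∫ x, f x * Ph (Lop p) x * sF d x ^ 2 := by
  have hd' : (3 : ℝ) ≤ d := by exact_mod_cast hd
  have hV := VV_Ph hd p
  have i1 : ∀ i, Integrable (fun x => pd f i x * dPh p i x) := fun i => by
    have := integrable_mul_of_sq (hf.2.1 i) (hV.2.1 i)
      (measurable_pd f i).aestronglyMeasurable (measurable_pd _ i).aestronglyMeasurable
    simpa only [pd_Ph] using this
  have i2 : ∀ i, Integrable (fun x => f x * ddPh p i i x) := fun i =>
    hf.integrable_mul_Bd hd (Bd_ddPh p i i) (continuous_ddPh p i i)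
  have key : ∀ i, ∫ x, (pd f i x * dPh p i x + f x * ddPh p i i x) = 0 := fun i => by
    refine integral_partial_zero (h := fun x => f x * dPh p i x) (i := i)
      (fun x => (hf.HD.mul (HD_dPh p i)).hasLine i x) ((i1 i).add (i2 i)) ?_
    have := hf.integrable_mul_Bd hd (g := fun x => dPh p i x * (1 + ‖x‖ ^ 2) ^ (-1 / 2 : ℝ))
      ((Bd_dPh p i).mul (Bd_rpowhalf le_rfl) (by linarith))
      ((continuous_dPh p i).mul (continuous_rho _))
    simpa only [mul_assoc] using this
  simp only [pd_Ph]
  rw [integral_finsetSum _ fun i _ => i1 i]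
  have e : ∀ i, ∫ x, pd f i x * dPh p i x = - ∫ x, f x * ddPh p i i x := fun i => by
    have := key i
    rw [integral_add (i1 i) (i2 i)] at this
    linarith
  simp only [e]
  rw [Finset.sum_neg_distrib, ← integral_finsetSum _ fun i _ => i2 i, ← integral_neg]
  refine integral_congr_ae (Filter.Eventually.of_forall fun x => ?_)
  simp only
  rw [← Finset.mul_sum, lap_Ph]; ring
end VSec

section Green
variable {d : ℕ}

/-- weight -/
def wF (d : ℕ) (x : EuclideanSpace ℝ (Fin d)) : ℝ := sF d x ^ 2 * uAT d x

lemma wF_pos (x : EuclideanSpace ℝ (Fin d)) : 0 < wF d x := mul_pos (pow_pos (sF_pos x) 2) (uAT_pos x)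

lemma wF_eq (x : EuclideanSpace ℝ (Fin d)) : wF d x = (1 + ‖x‖ ^ 2) ^ (-(((d : ℝ) + 2) / 2)) := by
  rw [wF, sF, uAT, inv_pow, ← rpow_natCast, ← rpow_neg (rho_pos x).le, ← rpow_add (rho_pos x)]
  congr 1; push_cast; ring

lemma continuous_uAT : Continuous (uAT d) := (HD_uAT d).continuous
lemma continuous_wF : Continuous (wF d) := (continuous_sF.pow 2).mul continuous_uAT

lemma Bd_wF : Bd (wF d) (-(((d : ℝ) + 2) / 2)) := Bd_sF2.mul Bd_uAT (by linarith)

lemma integrable_wF : Integrable (wF d) := Bd_wF.integrable continuous_wF (by linarith)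

lemma integral_1d (hd : 3 ≤ d) :
    ∫ y in Set.Ioi (0 : ℝ), y ^ (d - 1) • (1 + y ^ 2) ^ (-(((d : ℝ) + 2) / 2)) = 1 / (d : ℝ) := by
  have hd' : (3 : ℝ) ≤ d := by exact_mod_cast hd
  have hpos : ∀ y : ℝ, 0 < 1 + y ^ 2 := fun y => by positivity
  set g : ℝ → ℝ := fun y => (1 - (1 + y ^ 2)⁻¹) ^ ((d : ℝ) / 2) * (1 / d) with hg
  set g' : ℝ → ℝ := fun y => ((2 * y / (1 + y ^ 2) ^ 2) * ((d : ℝ) / 2) *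
    (1 - (1 + y ^ 2)⁻¹) ^ ((d : ℝ) / 2 - 1)) * (1 / d) with hg'
  have hder : ∀ y, HasDerivAt g (g' y) y := fun y => by
    have h1 : HasDerivAt (fun y : ℝ => 1 + y ^ 2) (2 * y) y := by
      simpa using ((hasDerivAt_id y).pow 2).const_add 1
    have h2 := (h1.inv (hpos y).ne').const_sub 1
    have h3 := (h2.rpow_const (p := (d : ℝ) / 2) (Or.inr (by linarith))).mul_const (1 / (d : ℝ))
    refine HasDerivAt.congr_deriv h3 ?_
    simp only [hg', Pi.inv_apply]; ring
  have heq : ∀ y ∈ Set.Ioi (0 : ℝ), y ^ (d - 1) • (1 + y ^ 2) ^ (-(((d : ℝ) + 2) / 2)) = g' y := by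
    intro y hy
    have hy : 0 < y := hy
    have e1 : 1 - (1 + y ^ 2)⁻¹ = y ^ 2 * (1 + y ^ 2)⁻¹ := by
      have := (hpos y).ne'
      field_simp; ring
    simp only [hg', e1, smul_eq_mul]
    have hq := hpos y
    clear e1
    generalize 1 + y ^ 2 = q at hq ⊢
    rw [mul_rpow (by positivity) (by positivity), inv_rpow hq.le, ← rpow_neg hq.le]
    have e2 : (y ^ 2) ^ ((d : ℝ) / 2 - 1) * y = y ^ (d - 1) := by
      rw [← rpow_natCast y 2, ← rpow_mul hy.le, ← rpow_natCast y (d - 1), ← rpow_add_one hy.ne']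
      congr 1; rw [Nat.cast_sub (by omega)]; push_cast; ring
    have e3 : (q ^ 2)⁻¹ * q ^ (-((d : ℝ) / 2 - 1)) = q ^ (-(((d : ℝ) + 2) / 2)) := by
      rw [← rpow_natCast q 2, ← rpow_neg hq.le, ← rpow_add hq]
      congr 1; push_cast; ring
    rw [← e3, ← e2, div_eq_mul_inv]
    have : (d : ℝ) ≠ 0 := by linarith
    field_simp
  rw [setIntegral_congr_fun measurableSet_Ioi heq]
  have hlim : Filter.Tendsto g Filter.atTop (nhds (1 / d)) := by
    have h1 : Filter.Tendsto (fun y : ℝ => 1 + y ^ 2) Filter.atTop Filter.atTop :=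
      Filter.tendsto_atTop_add_const_left _ _ (Filter.tendsto_pow_atTop (by norm_num))
    have h2 := (tendsto_inv_atTop_zero.comp h1).const_sub (1 : ℝ)
    have h3 := (h2.rpow_const (p := (d : ℝ) / 2) (Or.inl (by norm_num))).mul_const (1 / (d : ℝ))
    simpa [hg] using h3
  rw [integral_Ioi_of_hasDerivAt_of_nonneg' (fun y _ => hder y) ?_ hlim]
  · simp [hg, zero_rpow (show (d : ℝ) / 2 ≠ 0 by linarith)]
  · intro y hy
    rw [← heq y hy]
    have hy : 0 < y := hy
    exact smul_nonneg (by positivity) (rpow_nonneg (hpos y).le _)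

lemma integral_wF (hd : 3 ≤ d) : ∫ x, wF d x = sphereArea d / d := by
  have hd' : (3 : ℝ) ≤ d := by exact_mod_cast hd
  have : Nonempty (Fin d) := ⟨⟨0, by omega⟩⟩
  have : Nontrivial (EuclideanSpace ℝ (Fin d)) := by
    apply Module.nontrivial_of_finrank_pos (R := ℝ); simp; omega
  have h := integral_fun_norm_addHaar (volume : Measure (EuclideanSpace ℝ (Fin d)))
    (fun r : ℝ => (1 + r ^ 2) ^ (-(((d : ℝ) + 2) / 2)))
  simp only [← wF_eq, finrank_euclideanSpace, Fintype.card_fin] at h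
  rw [h, integral_1d hd, Measure.real, EuclideanSpace.volume_ball]
  have hG : 0 < Gamma ((d : ℝ) / 2) := Gamma_pos_of_pos (by linarith)
  simp only [Fintype.card_fin, ENNReal.ofReal_one, one_pow, one_mul]
  rw [Gamma_add_one (by linarith), ENNReal.toReal_ofReal (by positivity), sphereArea]
  have : √π ^ d = π ^ ((d : ℝ) / 2) := by
    rw [sqrt_eq_rpow, ← rpow_natCast, ← rpow_mul pi_pos.le]; congr 1; ring
  rw [this, nsmul_eq_mul, smul_eq_mul]
  field_simp

lemma integrable_of_fatou {α : Type*} [MeasurableSpace α] {μ : Measure α} {F : ℕ → α → ℝ} {f : α → ℝ}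
    (hF : ∀ n, Integrable (F n) μ) (h0 : ∀ n x, 0 ≤ F n x)
    (hlim : ∀ᵐ x ∂μ, Filter.Tendsto (fun n => F n x) Filter.atTop (nhds (f x)))
    {M : ℝ} (hM : ∀ n, ∫ x, F n x ∂μ ≤ M) : Integrable f μ := by
  have hm : AEStronglyMeasurable f μ :=
    aestronglyMeasurable_of_tendsto_ae Filter.atTop (fun n => (hF n).aestronglyMeasurable) hlim
  refine ⟨hm, ?_⟩
  have h1 : ∫⁻ x, ‖f x‖ₑ ∂μ ≤ Filter.liminf (fun n => ∫⁻ x, ‖F n x‖ₑ ∂μ) Filter.atTop := by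
    calc ∫⁻ x, ‖f x‖ₑ ∂μ = ∫⁻ x, Filter.liminf (fun n => ‖F n x‖ₑ) Filter.atTop ∂μ :=
          lintegral_congr_ae (hlim.mono fun x hx => (hx.enorm.liminf_eq).symm)
      _ ≤ _ := lintegral_liminf_le' fun n => (hF n).aestronglyMeasurable.enorm
  have h2 : ∀ n, ∫⁻ x, ‖F n x‖ₑ ∂μ ≤ ENNReal.ofReal M := fun n => by
    rw [← ofReal_integral_norm_eq_lintegral_enorm (hF n)]
    apply ENNReal.ofReal_le_ofReal
    simpa [abs_of_nonneg (h0 n _)] using hM n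
  refine lt_of_le_of_lt (h1.trans ?_) (ENNReal.ofReal_lt_top (r := M))
  refine Filter.liminf_le_of_frequently_le' ?_
  exact Filter.Frequently.of_forall h2

/-- scaled Aubin Talenti functions -/
lemma green_identity (hd : 3 ≤ d) (p : Pol d) (x₀ : EuclideanSpace ℝ (Fin d)) {c : ℝ} (hc : 0 < c) :
    Integrable (fun y => uAT d (c • (y - x₀)) * (sF d y ^ 2 * Ph (Lop p) y)) ∧
    ∫ y, uAT d (c • (y - x₀)) * (sF d y ^ 2 * Ph (Lop p) y) =
      (d * ((d : ℝ) - 2)) * c ^ 2 * ∫ y, Ph p y * wF d (c • (y - x₀)) := by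
  have hd' : (3 : ℝ) ≤ d := by exact_mod_cast hd
  have H1 := (HD_uAT d).aff c x₀
  have H2 : ∀ i, HD (fun y => c * duF d i (c • (y - x₀))) _ := fun i => ((HD_duF d i).aff c x₀).const_mul c
  have B1 : Bd (fun y => uAT d (c • (y - x₀))) (-(((d : ℝ) - 2) / 2)) :=
    Bd_uAT.aff (by linarith) hc x₀
  have B2 : ∀ i, Bd (fun y => c * duF d i (c • (y - x₀))) (-(((d : ℝ) - 1) / 2)) := fun i =>
    ((Bd_duF i).aff (by linarith) hc x₀).const_mul c
  have B3 : ∀ i, Bd (fun y => c * (c * dduF d i i (c • (y - x₀)))) (-((d : ℝ) / 2)) := fun i =>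
    (((Bd_dduF i i).aff (by linarith) hc x₀).const_mul c).const_mul c
  have C1 := H1.continuous
  have C2 := fun i => (H2 i).continuous
  have cdd : ∀ i, Continuous (dduF d i i) := fun i => by
    have h1 := continuous_sF (d := d)
    have h2 := continuous_uAT (d := d)
    have h3 := (HD.coord (d := d) i).continuous
    unfold dduF; fun_prop
  have C3 : ∀ i, Continuous (fun y => c * (c * dduF d i i (c • (y - x₀)))) := fun i => by
    have := cdd i
    fun_prop
  have i1 : ∀ i, Integrable (fun y => uAT d (c • (y - x₀)) * ddPh p i i y) := fun i =>
    (B1.mul (Bd_ddPh p i i) le_rfl).integrable (C1.mul (continuous_ddPh p i i)) (by linarith)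
  have i2 : ∀ i, Integrable (fun y => Ph p y * (c * (c * dduF d i i (c • (y - x₀))))) := fun i =>
    ((Bd_Ph p).mul (B3 i) le_rfl).integrable ((continuous_Ph p).mul (C3 i)) (by linarith)
  have key : ∀ i, ∫ y, (uAT d (c • (y - x₀)) * ddPh p i i y
      - Ph p y * (c * (c * dduF d i i (c • (y - x₀))))) = 0 := fun i => by
    refine integral_partial_zero (i := i)
      (h := fun y => uAT d (c • (y - x₀)) * dPh p i y - Ph p y * (c * duF d i (c • (y - x₀))))
      (fun x => ?_) ((i1 i).sub (i2 i)) ?_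
    · have := ((H1.mul (HD_dPh p i)).sub ((HD_Ph p).mul (H2 i))).hasLine i x
      convert this using 1
      simp only [duF]; ring
    · refine Bd.integrable (Bd.mul (m := -((d : ℝ) - 1)) (Bd.sub (B1.mul (Bd_dPh p i) le_rfl)
        ((Bd_Ph p).mul (B2 i) le_rfl)) (Bd_rpowhalf le_rfl) (by linarith)) ?_ (by linarith)
      exact ((C1.mul (continuous_dPh p i)).sub ((continuous_Ph p).mul (C2 i))).mul (continuous_rho _)
  have e1 : ∀ y, uAT d (c • (y - x₀)) * (sF d y ^ 2 * Ph (Lop p) y)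
      = - ∑ i, uAT d (c • (y - x₀)) * ddPh p i i y := fun y => by
    rw [← Finset.mul_sum, lap_Ph]; ring
  have e2 : ∀ y, (d * ((d : ℝ) - 2)) * c ^ 2 * (Ph p y * wF d (c • (y - x₀)))
      = - ∑ i, Ph p y * (c * (c * dduF d i i (c • (y - x₀)))) := fun y => by
    simp only [← Finset.mul_sum, sum_dduF, wF]; ring
  refine ⟨?_, ?_⟩
  · simp only [e1]
    exact (integrable_finsetSum _ fun i _ => i1 i).neg
  · rw [← integral_const_mul]
    simp only [e1, e2]
    rw [integral_neg, integral_neg, integral_finsetSum _ fun i _ => i1 i,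
      integral_finsetSum _ fun i _ => i2 i]
    congr 1
    refine Finset.sum_congr rfl fun i _ => ?_
    have := key i
    rw [integral_sub (i1 i) (i2 i)] at this
    linarith

lemma scale_integral (ψ w : EuclideanSpace ℝ (Fin d) → ℝ) (x₀ : EuclideanSpace ℝ (Fin d)) {c : ℝ}
    (hc : 0 < c) : ∫ y, ψ y * w (c • (y - x₀)) = (c ^ d)⁻¹ * ∫ z, ψ (x₀ + c⁻¹ • z) * w z := by
  have h1 := integral_sub_right_eq_self (μ := volume) (fun y => ψ (x₀ + y) * w (c • y)) x₀
  simp only [add_sub_cancel] at h1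
  rw [h1]
  have h2 := Measure.integral_comp_smul (volume : Measure (EuclideanSpace ℝ (Fin d)))
    (fun z => ψ (x₀ + c⁻¹ • z) * w z) c
  simp only [inv_smul_smul₀ hc.ne', finrank_euclideanSpace, Fintype.card_fin, smul_eq_mul] at h2
  rw [h2, abs_of_pos (by positivity)]

/-- the regularised Newton kernel -/
def Kc (d : ℕ) (c : ℝ) (x₀ y : EuclideanSpace ℝ (Fin d)) : ℝ := c ^ (d - 2) * uAT d (c • (y - x₀))

lemma Kc_eq (hd : 3 ≤ d) {c : ℝ} (hc : 0 < c) (x₀ y : EuclideanSpace ℝ (Fin d)) :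
    Kc d c x₀ y = ((c ^ 2)⁻¹ + ‖x₀ - y‖ ^ 2) ^ (-(((d : ℝ) - 2) / 2)) := by
  have e1 : (c ^ 2)⁻¹ + ‖x₀ - y‖ ^ 2 = (c ^ 2)⁻¹ * (1 + ‖c • (y - x₀)‖ ^ 2) := by
    rw [norm_smul, mul_pow, norm_eq_abs, sq_abs, norm_sub_rev]
    field_simp
  rw [e1, mul_rpow (by positivity) (by positivity), Kc, uAT]
  congr 1
  rw [inv_rpow (by positivity), ← rpow_neg (by positivity), neg_neg, ← rpow_natCast c 2,
    ← rpow_mul hc.le, ← rpow_natCast]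
  congr 1
  rw [Nat.cast_sub (by omega)]; push_cast; ring

/-- Newton kernel without normalisation -/
def Nk (d : ℕ) (x : EuclideanSpace ℝ (Fin d)) : ℝ := ‖x‖ ^ ((2 : ℝ) - d)

lemma Nk_eq (x : EuclideanSpace ℝ (Fin d)) : Nk d x = (‖x‖ ^ 2) ^ (-(((d : ℝ) - 2) / 2)) := by
  rw [Nk, ← rpow_natCast, ← rpow_mul (norm_nonneg _)]
  congr 1; push_cast; ring

lemma Kc_le (hd : 3 ≤ d) {c : ℝ} (hc : 0 < c) (x₀ y : EuclideanSpace ℝ (Fin d)) (h : y ≠ x₀) :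
    Kc d c x₀ y ≤ Nk d (x₀ - y) := by
  have hd' : (3 : ℝ) ≤ d := by exact_mod_cast hd
  have : 0 < ‖x₀ - y‖ := norm_pos_iff.2 (sub_ne_zero.2 h.symm)
  rw [Kc_eq hd hc, Nk_eq]
  exact rpow_le_rpow_of_nonpos (by positivity) (by linarith [show 0 < (c ^ 2)⁻¹ by positivity])
    (by linarith)

lemma Kc_pos {c : ℝ} (hc : 0 < c) (x₀ y : EuclideanSpace ℝ (Fin d)) : 0 < Kc d c x₀ y :=
  mul_pos (by positivity) (uAT_pos _)

lemma Kc_tendsto (hd : 3 ≤ d) (x₀ y : EuclideanSpace ℝ (Fin d)) (h : y ≠ x₀) :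
    Filter.Tendsto (fun n : ℕ => Kc d (n + 1) x₀ y) Filter.atTop (nhds (Nk d (x₀ - y))) := by
  have : 0 < ‖x₀ - y‖ := norm_pos_iff.2 (sub_ne_zero.2 h.symm)
  have e : ∀ n : ℕ, Kc d (n + 1) x₀ y = ((((n : ℝ) + 1) ^ 2)⁻¹ + ‖x₀ - y‖ ^ 2) ^ (-(((d : ℝ) - 2) / 2)) :=
    fun n => Kc_eq hd (by positivity) x₀ y
  simp only [e, Nk_eq]
  refine Filter.Tendsto.rpow_const ?_ (Or.inl (by positivity))
  have h1 := (tendsto_one_div_add_atTop_nhds_zero_nat (𝕜 := ℝ)).pow 2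
  have h2 := h1.add_const (‖x₀ - y‖ ^ 2)
  simpa using h2

lemma approx_id (hd : 3 ≤ d) (p : Pol d) (x₀ : EuclideanSpace ℝ (Fin d)) :
    Filter.Tendsto (fun n : ℕ => ∫ y, Kc d (n + 1) x₀ y * (sF d y ^ 2 * Ph (Lop p) y)) Filter.atTop
      (nhds (Ph p x₀ * (((d : ℝ) - 2) * sphereArea d))) := by
  have hd' : (3 : ℝ) ≤ d := by exact_mod_cast hd
  have e : ∀ n : ℕ, ∫ y, Kc d (n + 1) x₀ y * (sF d y ^ 2 * Ph (Lop p) y) =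
      (d * ((d : ℝ) - 2)) * ∫ z, Ph p (x₀ + ((n : ℝ) + 1)⁻¹ • z) * wF d z := fun n => by
    have hc : (0 : ℝ) < n + 1 := by positivity
    simp only [Kc, mul_assoc]
    rw [integral_const_mul, (green_identity hd p x₀ hc).2, scale_integral _ _ _ hc]
    have : ((n : ℝ) + 1) ^ d = ((n : ℝ) + 1) ^ (d - 2) * ((n : ℝ) + 1) ^ 2 := by
      rw [← pow_add]; congr 1; omega
    rw [this]; field_simp
  simp only [e]
  have hl : Ph p x₀ * (((d : ℝ) - 2) * sphereArea d) =
      (d * ((d : ℝ) - 2)) * ∫ z, Ph p x₀ * wF d z := by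
    rw [integral_const_mul, integral_wF hd]; field_simp
  rw [hl]
  refine Filter.Tendsto.const_mul _ ?_
  obtain ⟨C, hC, hb⟩ := (Bd_Ph p).mono (m := 0) (by linarith)
  refine tendsto_integral_of_dominated_convergence (fun z => C * wF d z) (fun n => ?_)
    (integrable_wF.const_mul C) (fun n => Filter.Eventually.of_forall fun z => ?_)
    (Filter.Eventually.of_forall fun z => ?_)
  · have h1 := continuous_Ph p
    have h2 := continuous_wF (d := d)
    exact Continuous.aestronglyMeasurable (by fun_prop)
  · rw [norm_mul, norm_eq_abs, norm_eq_abs, abs_of_pos (wF_pos z)]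
    have := hb (x₀ + ((n : ℝ) + 1)⁻¹ • z)
    rw [rpow_zero, mul_one] at this
    exact mul_le_mul_of_nonneg_right this (wF_pos z).le
  · refine Filter.Tendsto.mul_const _ ?_
    have h1 : Continuous fun t : ℝ => Ph p (x₀ + t • z) := by
      have := continuous_Ph p
      fun_prop
    have h2 := (h1.tendsto 0).comp (tendsto_one_div_add_atTop_nhds_zero_nat (𝕜 := ℝ))
    simpa [Function.comp_def] using h2

lemma Lop_one : Lop (1 : Pol d) = MvPolynomial.C (d * ((d : ℝ) - 2)) := by
  rw [Lop_apply]; simp [MvPolynomial.smul_eq_C_mul]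

lemma evo_C (c : ℝ) (x : EuclideanSpace ℝ (Fin d)) : evo (MvPolynomial.C c) x = c := by simp [evo]

lemma Ph_one (x : EuclideanSpace ℝ (Fin d)) : Ph 1 x = uAT d x := by simp [Ph, evo]

lemma ae_ne (hd : 3 ≤ d) (x₀ : EuclideanSpace ℝ (Fin d)) : ∀ᵐ y : EuclideanSpace ℝ (Fin d), y ≠ x₀ := by
  have : Nontrivial (EuclideanSpace ℝ (Fin d)) := by
    apply Module.nontrivial_of_finrank_pos (R := ℝ); simp; omega
  rw [ae_iff]; simp

lemma integrable_Nk_wF (hd : 3 ≤ d) (x₀ : EuclideanSpace ℝ (Fin d)) :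
    Integrable (fun y => Nk d (x₀ - y) * wF d y) := by
  have hd' : (3 : ℝ) ≤ d := by exact_mod_cast hd
  have hpos : 0 < (d * ((d : ℝ) - 2)) := mul_pos (by linarith) (by linarith)
  have h1 := approx_id hd 1 x₀
  obtain ⟨M, hM⟩ := h1.bddAbove_range
  have e : ∀ n : ℕ, ∀ y, Kc d (n + 1) x₀ y * (sF d y ^ 2 * Ph (Lop 1) y) =
      Kc d (n + 1) x₀ y * wF d y * (d * ((d : ℝ) - 2)) := fun n y => by
    rw [Lop_one, Ph, evo_C, wF]; ring
  have hM' : ∀ n : ℕ, ∫ y, Kc d (n + 1) x₀ y * wF d y * (d * ((d : ℝ) - 2)) ≤ M := fun n => by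
    simp only [← e]
    exact hM ⟨n, rfl⟩
  have := integrable_of_fatou (μ := volume) (F := fun n : ℕ => fun y => Kc d (n + 1) x₀ y * wF d y * (d * ((d : ℝ) - 2)))
    (f := fun y => Nk d (x₀ - y) * wF d y * (d * ((d : ℝ) - 2))) (fun n => ?_) (fun n y => ?_) ?_ hM'
  · refine (this.mul_const (d * ((d : ℝ) - 2))⁻¹).congr (Filter.Eventually.of_forall fun y => ?_)
    simp only
    rw [mul_assoc _ (d * ((d : ℝ) - 2)), mul_inv_cancel₀ hpos.ne', mul_one]
  · refine Integrable.congr ?_ (Filter.Eventually.of_forall (e n))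
    simp only [Kc, mul_assoc]
    exact ((green_identity hd 1 x₀ (show (0 : ℝ) < n + 1 by positivity)).1).const_mul _
  · exact mul_nonneg (mul_pos (Kc_pos (by positivity) _ _) (wF_pos y)).le hpos.le
  · filter_upwards [ae_ne hd x₀] with y hy
    exact ((Kc_tendsto hd x₀ y hy).mul_const _).mul_const _

lemma sphereArea_pos (hd : 3 ≤ d) : 0 < sphereArea d := by
  have hd' : (3 : ℝ) ≤ d := by exact_mod_cast hd
  have hG : 0 < Gamma ((d : ℝ) / 2) := Gamma_pos_of_pos (by linarith)
  rw [sphereArea]; positivity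

lemma measurable_Nk : Measurable (Nk d) := by
  unfold Nk; fun_prop

lemma green_Ph (hd : 3 ≤ d) (p : Pol d) (x₀ : EuclideanSpace ℝ (Fin d)) :
    ∫ y, greenKernel d (x₀ - y) * (sF d y ^ 2 * Ph (Lop p) y) = Ph p x₀ := by
  have hd' : (3 : ℝ) ≤ d := by exact_mod_cast hd
  have hA : 0 < (((d : ℝ) - 2) * sphereArea d) := mul_pos (by linarith) (sphereArea_pos hd)
  obtain ⟨C, hC, hb⟩ := Bd_evo (Lop p)
  have lim : Filter.Tendsto (fun n : ℕ => ∫ y, Kc d (n + 1) x₀ y * (sF d y ^ 2 * Ph (Lop p) y))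
      Filter.atTop (nhds (∫ y, Nk d (x₀ - y) * (sF d y ^ 2 * Ph (Lop p) y))) := by
    refine tendsto_integral_of_dominated_convergence (fun y => C * (Nk d (x₀ - y) * wF d y))
      (fun n => ?_) ((integrable_Nk_wF hd x₀).const_mul C) (fun n => ?_) ?_
    · simp only [Kc, mul_assoc]
      exact (((green_identity hd p x₀ (show (0 : ℝ) < n + 1 by positivity)).1).const_mul _).aestronglyMeasurable
    · filter_upwards [ae_ne hd x₀] with y hy
      have h0 := Kc_pos (d := d) (show (0 : ℝ) < n + 1 by positivity) x₀ y
      have h1 := Kc_le hd (show (0 : ℝ) < n + 1 by positivity) x₀ y hy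
      have h2 := hb y
      rw [rpow_zero, mul_one] at h2
      have e : Kc d (n + 1) x₀ y * (sF d y ^ 2 * Ph (Lop p) y) =
          (Kc d (n + 1) x₀ y * wF d y) * evo (Lop p) y := by rw [Ph, wF]; ring
      have h3 := wF_pos y
      rw [e, norm_mul, norm_eq_abs, norm_eq_abs, abs_of_pos (mul_pos h0 h3), mul_comm C]
      gcongr
      exact mul_nonneg (h0.le.trans h1) h3.le
    · filter_upwards [ae_ne hd x₀] with y hy
      exact (Kc_tendsto hd x₀ y hy).mul_const _
  have h := tendsto_nhds_unique lim (approx_id hd p x₀)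
  have e : ∀ y, greenKernel d (x₀ - y) * (sF d y ^ 2 * Ph (Lop p) y) =
      Nk d (x₀ - y) * (sF d y ^ 2 * Ph (Lop p) y) / (((d : ℝ) - 2) * sphereArea d) := fun y => by
    rw [greenKernel, Nk]; ring
  simp only [e]
  rw [integral_div, h, mul_div_cancel_right₀ _ hA.ne']

end Green

section FormB
variable {d : ℕ} {f g h : EuclideanSpace ℝ (Fin d) → ℝ}

/-- continuous functions in the weighted `L²` space -/
def L2c (f : EuclideanSpace ℝ (Fin d) → ℝ) : Prop :=
  Continuous f ∧ Integrable (fun x => f x * f x * sF d x ^ 2)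

lemma VV.L2c (hf : VV f) : L2c f := ⟨hf.continuous, hf.2.2.2⟩

lemma gk_symm (x y : EuclideanSpace ℝ (Fin d)) : greenKernel d (x - y) = greenKernel d (y - x) := by
  rw [greenKernel, greenKernel, norm_sub_rev]

lemma gk_nonneg (hd : 3 ≤ d) (x : EuclideanSpace ℝ (Fin d)) : 0 ≤ greenKernel d x := by
  have hd' : (3 : ℝ) ≤ d := by exact_mod_cast hd
  exact div_nonneg (rpow_nonneg (norm_nonneg _) _) (mul_nonneg (by linarith) (sphereArea_pos hd).le)

lemma measurable_gk : Measurable (greenKernel d) := measurable_Nk.div_const _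

lemma integrable_gk_wF (hd : 3 ≤ d) (x₀ : EuclideanSpace ℝ (Fin d)) :
    Integrable (fun y => greenKernel d (x₀ - y) * wF d y) := by
  refine ((integrable_Nk_wF hd x₀).div_const (((d : ℝ) - 2) * sphereArea d)).congr
    (Filter.Eventually.of_forall fun y => ?_)
  simp only [greenKernel, Nk]; ring

lemma integral_gk_wF (hd : 3 ≤ d) (x₀ : EuclideanSpace ℝ (Fin d)) :
    ∫ y, greenKernel d (x₀ - y) * wF d y = uAT d x₀ / lam d 0 := by
  have hd' : (3 : ℝ) ≤ d := by exact_mod_cast hd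
  have hpos : 0 < (d * ((d : ℝ) - 2)) := mul_pos (by linarith) (by linarith)
  have h := green_Ph hd 1 x₀
  have e : ∀ y, greenKernel d (x₀ - y) * (sF d y ^ 2 * Ph (Lop 1) y) =
      greenKernel d (x₀ - y) * wF d y * (d * ((d : ℝ) - 2)) := fun y => by
    rw [Lop_one, Ph, evo_C, wF]; ring
  simp only [e] at h
  rw [integral_mul_const, Ph_one] at h
  have : lam d 0 = d * ((d : ℝ) - 2) := by simp [lam]
  rw [this, eq_div_iff hpos.ne', h]

/-- auxiliary majorant for the Schur test -/
def Aux (h : EuclideanSpace ℝ (Fin d) → ℝ) (z : EuclideanSpace ℝ (Fin d) × EuclideanSpace ℝ (Fin d)) : ℝ :=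
  (h z.1 * h z.1 * sF d z.1 ^ 2 / uAT d z.1) * (greenKernel d (z.1 - z.2) * wF d z.2)

lemma lam0_pos (hd : 3 ≤ d) : 0 < lam d 0 := by
  have hd' : (3 : ℝ) ≤ d := by exact_mod_cast hd
  simp only [lam]; push_cast; exact mul_pos (by linarith) (by linarith)

lemma measurable_gk2 : Measurable (fun z : EuclideanSpace ℝ (Fin d) × EuclideanSpace ℝ (Fin d) =>
    greenKernel d (z.1 - z.2)) := measurable_gk.comp (measurable_fst.sub measurable_snd)

lemma Aux_integrable (hd : 3 ≤ d) (hh : L2c h) :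
    Integrable (Aux h) (volume.prod volume) ∧
    ∫ z, Aux h z ∂(volume.prod volume) = (∫ x, h x * h x * sF d x ^ 2) / lam d 0 := by
  have hm : Measurable (Aux h) := by
    have h1 := hh.1.measurable
    have h2 := (continuous_sF (d := d)).measurable
    have h3 := (continuous_uAT (d := d)).measurable
    have h4 := (continuous_wF (d := d)).measurable
    have h5 := measurable_gk2 (d := d)
    unfold Aux
    fun_prop
  have hin : ∀ x, ∫ y, Aux h (x, y) = (h x * h x * sF d x ^ 2) / lam d 0 := fun x => by
    simp only [Aux]
    rw [integral_const_mul, integral_gk_wF hd]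
    have := (uAT_pos x).ne'
    have := (lam0_pos hd).ne'
    field_simp
  have hpos : ∀ z, 0 ≤ Aux h z := fun z => mul_nonneg (div_nonneg (mul_nonneg (mul_self_nonneg _)
    (sq_nonneg _)) (uAT_pos _).le) (mul_nonneg (gk_nonneg hd _) (wF_pos _).le)
  have hI : Integrable (Aux h) (volume.prod volume) := by
    rw [integrable_prod_iff hm.aestronglyMeasurable]
    refine ⟨Filter.Eventually.of_forall fun x => ?_, ?_⟩
    · simp only [Aux]
      exact (integrable_gk_wF hd x).const_mul _
    simp only [norm_eq_abs, abs_of_nonneg (hpos _), hin]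
    exact hh.2.div_const _
  refine ⟨hI, ?_⟩
  rw [integral_prod _ hI]
  simp only [hin]
  rw [integral_div]

/-- integrand of the form `B` -/
def Bk (f g : EuclideanSpace ℝ (Fin d) → ℝ) (z : EuclideanSpace ℝ (Fin d) × EuclideanSpace ℝ (Fin d)) : ℝ :=
  (f z.1 * sF d z.1 ^ 2) * (greenKernel d (z.1 - z.2) * (g z.2 * sF d z.2 ^ 2))

/-- the form `B` -/
def Bf (f g : EuclideanSpace ℝ (Fin d) → ℝ) : ℝ := ∫ z, Bk f g z ∂(volume.prod volume)

lemma Bk_le (hd : 3 ≤ d) (f g : EuclideanSpace ℝ (Fin d) → ℝ) (z) :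
    |Bk f g z| ≤ (Aux f z + Aux g z.swap) / 2 := by
  obtain ⟨x, y⟩ := z
  have hu := uAT_pos x
  have hv := uAT_pos y
  have hk := gk_nonneg hd (x - y)
  have e1 : |Bk f g (x, y)| = (greenKernel d (x - y) * sF d x ^ 2 * sF d y ^ 2) * (|f x| * |g y|) := by
    simp only [Bk]
    rw [abs_mul, abs_mul, abs_mul, abs_mul, abs_of_nonneg hk, abs_of_nonneg (sq_nonneg (sF d x)),
      abs_of_nonneg (sq_nonneg (sF d y))]
    ring
  have e2 : (Aux f (x, y) + Aux g (Prod.swap (x, y))) / 2 =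
      (greenKernel d (x - y) * sF d x ^ 2 * sF d y ^ 2) *
      ((|f x| ^ 2 * (uAT d y / uAT d x) + |g y| ^ 2 * (uAT d x / uAT d y)) / 2) := by
    simp only [Aux, Prod.swap, wF, gk_symm y x, sq_abs]
    ring
  rw [e1, e2]
  refine mul_le_mul_of_nonneg_left ?_ (mul_nonneg (mul_nonneg hk (sq_nonneg _)) (sq_nonneg _))
  have hp : 0 < uAT d x * uAT d y := mul_pos hu hv
  have : |f x| ^ 2 * (uAT d y / uAT d x) + |g y| ^ 2 * (uAT d x / uAT d y) - 2 * (|f x| * |g y|)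
      = (|f x| * uAT d y - |g y| * uAT d x) ^ 2 / (uAT d x * uAT d y) := by
    field_simp; ring
  have h2 : 0 ≤ (|f x| * uAT d y - |g y| * uAT d x) ^ 2 / (uAT d x * uAT d y) := by positivity
  linarith

lemma Bk_integrable (hd : 3 ≤ d) (hf : L2c f) (hg : L2c g) : Integrable (Bk f g) (volume.prod volume) := by
  have hm : Measurable (Bk f g) := by
    have h1 := hf.1.measurable
    have h1' := hg.1.measurable
    have h2 := (continuous_sF (d := d)).measurable
    have h5 := measurable_gk2 (d := d)
    unfold Bk
    fun_prop
  exact (((Aux_integrable hd hf).1.add (Aux_integrable hd hg).1.swap).div_const 2).mono'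
    hm.aestronglyMeasurable (Filter.Eventually.of_forall fun z => Bk_le hd f g z)

lemma Bf_le (hd : 3 ≤ d) (hf : L2c f) : |Bf f f| ≤ (∫ x, f x * f x * sF d x ^ 2) / lam d 0 := by
  have h := Aux_integrable hd hf
  have := norm_integral_le_of_norm_le (f := Bk f f) ((h.1.add h.1.swap).div_const 2)
    (Filter.Eventually.of_forall fun z => Bk_le hd f f z)
  refine this.trans (le_of_eq ?_)
  simp only [Pi.add_apply]
  rw [integral_div, integral_add h.1 h.1.swap]
  have e : ∫ z, (Aux f ∘ Prod.swap) z ∂(volume.prod volume) = ∫ z, Aux f z ∂(volume.prod volume) :=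
    integral_prod_swap (Aux f)
  rw [e, h.2]; ring

lemma Bf_symm (f g : EuclideanSpace ℝ (Fin d) → ℝ) : Bf f g = Bf g f := by
  rw [Bf, Bf, ← integral_prod_swap (Bk f g)]
  refine integral_congr_ae (Filter.Eventually.of_forall fun z => ?_)
  simp only [Bk, Prod.fst_swap, Prod.snd_swap]
  rw [gk_symm]; ring

lemma Bf_sub_left (hd : 3 ≤ d) (hf : L2c f) (hg : L2c g) (hh : L2c h) :
    Bf (fun x => f x - g x) h = Bf f h - Bf g h := by
  rw [Bf, Bf, Bf, ← integral_sub (Bk_integrable hd hf hh) (Bk_integrable hd hg hh)]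
  refine integral_congr_ae (Filter.Eventually.of_forall fun z => ?_)
  simp only [Bk]; ring

lemma Bf_Ph (hd : 3 ≤ d) (hf : L2c f) (p : Pol d) {l : ℝ} (hl : l ≠ 0)
    (hp : ∀ x, Ph (Lop p) x = l * Ph p x) :
    Bf f (Ph p) = (∫ x, f x * Ph p x * sF d x ^ 2) / l := by
  rw [Bf, integral_prod _ (Bk_integrable hd hf (VV_Ph hd p).L2c), ← integral_div]
  refine integral_congr_ae (Filter.Eventually.of_forall fun x => ?_)
  simp only [Bk]
  rw [integral_const_mul]
  have h := green_Ph hd p x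
  have e : ∀ y, greenKernel d (x - y) * (sF d y ^ 2 * Ph (Lop p) y) =
      l * (greenKernel d (x - y) * (Ph p y * sF d y ^ 2)) := fun y => by rw [hp]; ring
  simp only [e] at h
  rw [integral_const_mul] at h
  rw [← h]; field_simp

lemma div_rho (a : ℝ) (x : EuclideanSpace ℝ (Fin d)) : a / (1 + ‖x‖ ^ 2) ^ 2 = a * sF d x ^ 2 := by
  rw [sF, inv_pow, div_eq_mul_inv]

lemma quadG_eq (hd : 3 ≤ d) (hf : L2c f) :
    quadG d f = (∫ x, f x * f x * sF d x ^ 2) / lam d 1 - Bf f f := by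
  rw [quadG, Bf, integral_prod _ (Bk_integrable hd hf hf)]
  have e : ((d : ℝ) * (d + 2)) = lam d 1 := by simp [lam]; ring
  congr 1
  · rw [e, one_div, inv_mul_eq_div]
    congr 1
    refine integral_congr_ae (Filter.Eventually.of_forall fun x => ?_)
    simp only [div_rho]; ring
  · refine integral_congr_ae (Filter.Eventually.of_forall fun x => ?_)
    simp only [div_rho, invLap, Bk]
    rw [integral_const_mul]

end FormB

section Density
variable {d : ℕ} {f g h : EuclideanSpace ℝ (Fin d) → ℝ}

lemma evo_add (p q : Pol d) (x) : evo (p + q) x = evo p x + evo q x := by simp [evo]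
lemma evo_mul (p q : Pol d) (x) : evo (p * q) x = evo p x * evo q x := by simp [evo]
lemma evo_smul (c : ℝ) (p : Pol d) (x) : evo (c • p) x = c * evo p x := by simp [evo]
lemma evo_sub (p q : Pol d) (x) : evo (p - q) x = evo p x - evo q x := by simp [evo]
lemma Ph_add (p q : Pol d) (x) : Ph (p + q) x = Ph p x + Ph q x := by simp [Ph, evo_add, mul_add]
lemma Ph_sub (p q : Pol d) (x) : Ph (p - q) x = Ph p x - Ph q x := by simp [Ph, evo_sub, mul_sub]
lemma Ph_smul (c : ℝ) (p : Pol d) (x) : Ph (c • p) x = c * Ph p x := by simp [Ph, evo_smul]; ring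

/-- the star subalgebra of bounded continuous functions `evo p` -/
def evoAlg (d : ℕ) : StarSubalgebra ℝ (BoundedContinuousFunction (EuclideanSpace ℝ (Fin d)) ℝ) where
  carrier := {φ | ∃ p : Pol d, ∀ x, φ x = evo p x}
  mul_mem' := by
    rintro a b ⟨p, hp⟩ ⟨q, hq⟩
    exact ⟨p * q, fun x => by rw [evo_mul, ← hp, ← hq]; rfl⟩
  add_mem' := by
    rintro a b ⟨p, hp⟩ ⟨q, hq⟩
    exact ⟨p + q, fun x => by rw [evo_add, ← hp, ← hq]; rfl⟩
  algebraMap_mem' := fun r => ⟨MvPolynomial.C r, fun x => by rw [evo_C]; rfl⟩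
  star_mem' := by
    rintro a ⟨p, hp⟩
    exact ⟨p, fun x => by rw [← hp]; simp⟩

/-- `evo p` as a bounded continuous function -/
def evoB (p : Pol d) : BoundedContinuousFunction (EuclideanSpace ℝ (Fin d)) ℝ :=
  BoundedContinuousFunction.ofNormedAddCommGroup (evo p) (HD_evo p).continuous
    (Classical.choose (Bd_evo p)) (fun x => by
      have := (Classical.choose_spec (Bd_evo p)).2 x
      rwa [rpow_zero, mul_one] at this)

lemma evo_X (a : Option (Fin d)) (x : EuclideanSpace ℝ (Fin d)) :
    evo (MvPolynomial.X a) x = om d x a := by simp [evo]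

lemma evoAlg_sep : ((evoAlg d).map
    (BoundedContinuousFunction.toContinuousMapStarₐ ℝ)).SeparatesPoints := by
  intro x y hxy
  have : ∃ a, om d x a ≠ om d y a := by
    by_contra hcon
    push Not at hcon
    apply hxy
    have h0 := hcon none
    simp only [om] at h0
    have hs : sF d x = sF d y := by linarith
    ext j
    have h1 := hcon (some j)
    simp only [om] at h1
    rw [hs] at h1
    have := sF_pos y
    nlinarith [mul_right_cancel₀ this.ne' h1]
  obtain ⟨a, ha⟩ := this
  refine ⟨fun x => evo (MvPolynomial.X a) x, ⟨_, ⟨evoB (MvPolynomial.X a), ⟨_, fun x => rfl⟩, rfl⟩, rfl⟩, ?_⟩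
  simpa only [evo_X] using ha

lemma zero_of_orth {k : EuclideanSpace ℝ (Fin d) → ℝ} (hk : Integrable k)
    (h : ∀ p : Pol d, ∫ x, k x * evo p x = 0) : k =ᵐ[volume] 0 := by
  have m1 : AEMeasurable (fun x => ENNReal.ofReal (k x)) volume := hk.aemeasurable.ennreal_ofReal
  have m2 : AEMeasurable (fun x => ENNReal.ofReal (-k x)) volume := hk.neg.aemeasurable.ennreal_ofReal
  have f1 : ∫⁻ x, ENNReal.ofReal (k x) ≠ ⊤ := hk.lintegral_lt_top.ne
  have f2 : ∫⁻ x, ENNReal.ofReal (-k x) ≠ ⊤ := hk.neg.lintegral_lt_top.ne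
  have : IsFiniteMeasure (volume.withDensity (fun x => ENNReal.ofReal (k x))) := isFiniteMeasure_withDensity f1
  have : IsFiniteMeasure (volume.withDensity (fun x => ENNReal.ofReal (-k x))) := isFiniteMeasure_withDensity f2
  have key : volume.withDensity (fun x => ENNReal.ofReal (k x)) =
      volume.withDensity (fun x => ENNReal.ofReal (-k x)) := by
    refine ext_of_forall_mem_subalgebra_integral_eq_of_pseudoEMetric_complete_countable
      (𝕜 := ℝ) (A := evoAlg d) evoAlg_sep ?_
    rintro φ ⟨p, hp⟩
    rw [integral_withDensity_eq_integral_toReal_smul₀ m1 (by simp),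
      integral_withDensity_eq_integral_toReal_smul₀ m2 (by simp)]
    simp only [hp, smul_eq_mul, ENNReal.toReal_ofReal']
    have b : ∃ C, ∀ x, |evo p x| ≤ C := by
      obtain ⟨C, _, hC⟩ := Bd_evo p
      exact ⟨C, fun x => by simpa using hC x⟩
    obtain ⟨C, hC⟩ := b
    have i1 : Integrable (fun x => max (k x) 0 * evo p x) :=
      hk.pos_part.mul_bdd (c := C) (HD_evo p).continuous.aestronglyMeasurable
        (Filter.Eventually.of_forall hC)
    have i2 : Integrable (fun x => max (-k x) 0 * evo p x) :=
      hk.neg_part.mul_bdd (c := C) (HD_evo p).continuous.aestronglyMeasurable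
        (Filter.Eventually.of_forall hC)
    rw [← sub_eq_zero, ← integral_sub i1 i2]
    refine Eq.trans ?_ (h p)
    refine integral_congr_ae (Filter.Eventually.of_forall fun x => ?_)
    simp only
    rcases le_total (k x) 0 with h0 | h0
    · rw [max_eq_right h0, max_eq_left (by linarith)]; ring
    · rw [max_eq_left h0, max_eq_right (by linarith)]; ring
  have := (withDensity_eq_iff m1 m2 f1).1 key
  filter_upwards [this] with x hx
  rcases le_total (k x) 0 with h0 | h0
  · rw [ENNReal.ofReal_of_nonpos h0, eq_comm, ENNReal.ofReal_eq_zero] at hx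
    simp only [Pi.zero_apply]; linarith
  · rw [ENNReal.ofReal_of_nonpos (show -k x ≤ 0 by linarith), ENNReal.ofReal_eq_zero] at hx
    simp only [Pi.zero_apply]; linarith

lemma L2c.memLp (hf : L2c f) : MemLp (fun x => f x * sF d x) 2 volume := by
  refine (memLp_two_iff_integrable_sq (f := fun x => f x * sF d x)
    (hf.1.mul continuous_sF).aestronglyMeasurable).2 ?_
  exact hf.2.congr (Filter.Eventually.of_forall fun x => by ring)

/-- embedding in `L²` -/
def Jm (hf : L2c f) : Lp ℝ 2 (volume : Measure (EuclideanSpace ℝ (Fin d))) := hf.memLp.toLp _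

lemma inner_Jm (hf : L2c f) (hg : L2c g) :
    inner ℝ (Jm hf) (Jm hg) = ∫ x, f x * g x * sF d x ^ 2 := by
  rw [L2.inner_def]
  refine integral_congr_ae ?_
  filter_upwards [hf.memLp.coeFn_toLp, hg.memLp.coeFn_toLp] with x h1 h2
  simp only [Jm, h1, h2]
  simp; ring

/-- `p ↦ Ph p` into `L²` -/
def TPh (hd : 3 ≤ d) : Pol d →ₗ[ℝ] Lp ℝ 2 (volume : Measure (EuclideanSpace ℝ (Fin d))) where
  toFun p := Jm (VV_Ph hd p).L2c
  map_add' p q := by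
    rw [Jm, Jm, Jm, ← MemLp.toLp_add]
    refine MemLp.toLp_congr _ _ (Filter.Eventually.of_forall fun x => ?_)
    simp only [Pi.add_apply, Ph_add]; ring
  map_smul' c p := by
    rw [RingHom.id_apply, Jm, Jm, ← MemLp.toLp_const_smul]
    refine MemLp.toLp_congr _ _ (Filter.Eventually.of_forall fun x => ?_)
    simp only [Pi.smul_apply, Ph_smul, smul_eq_mul]; ring

lemma range_TPh_orth (hd : 3 ≤ d) : (LinearMap.range (TPh hd))ᗮ = ⊥ := by
  have hd' : (3 : ℝ) ≤ d := by exact_mod_cast hd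
  rw [Submodule.eq_bot_iff]
  intro h hh
  have hmem : MemLp (fun x => uAT d x * sF d x) 2 volume :=
    L2c.memLp (f := uAT d) (by
      have := (VV_Ph hd (1 : Pol d)).L2c
      have e : Ph (1 : Pol d) = uAT d := funext Ph_one
      rwa [e] at this)
  have hk : Integrable (fun x => h x * (uAT d x * sF d x)) := (Lp.memLp h).integrable_mul hmem
  have := zero_of_orth hk (fun p => by
    have h1 := (Submodule.mem_orthogonal _ _).1 hh (TPh hd p) ⟨p, rfl⟩
    rw [L2.inner_def] at h1
    rw [← h1]
    refine integral_congr_ae ?_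
    filter_upwards [(VV_Ph hd p).L2c.memLp.coeFn_toLp] with x hx
    have : (TPh hd p) x = Ph p x * sF d x := hx
    rw [this]
    simp [Ph]; ring)
  rw [Lp.eq_zero_iff_ae_eq_zero]
  filter_upwards [this] with x hx
  simp only [Pi.zero_apply, mul_eq_zero, (uAT_pos x).ne', (sF_pos x).ne', or_false] at hx
  simpa using hx

lemma L2c.sub (hf : L2c f) (hg : L2c g) : L2c (fun x => f x - g x) := by
  refine ⟨hf.1.sub hg.1, ?_⟩
  have := (hf.2.add hg.2).sub ((integrable_I' hf.2 hg.2 hf.1 hg.1).const_mul 2)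
  refine this.congr (Filter.Eventually.of_forall fun x => ?_)
  simp only [Pi.sub_apply, Pi.add_apply]; ring

lemma Jm_sub (hf : L2c f) (hg : L2c g) : Jm (hf.sub hg) = Jm hf - Jm hg := by
  rw [Jm, Jm, Jm, ← MemLp.toLp_sub]
  refine MemLp.toLp_congr _ _ (Filter.Eventually.of_forall fun x => ?_)
  simp only [Pi.sub_apply]; ring

theorem proj_exists (hd : 3 ≤ d) (hf : L2c f) : ∃ p : ℕ → Pol d, (∀ n, (p n).totalDegree ≤ n) ∧
    (∀ n (q : Pol d), q.totalDegree ≤ n → ∫ x, (f x - Ph (p n) x) * Ph q x * sF d x ^ 2 = 0) ∧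
    Filter.Tendsto (fun n => ∫ x, (f x - Ph (p n) x) * (f x - Ph (p n) x) * sF d x ^ 2)
      Filter.atTop (nhds 0) := by
  set W : ℕ → Submodule ℝ (Lp ℝ 2 (volume : Measure (EuclideanSpace ℝ (Fin d)))) := fun n =>
    (MvPolynomial.restrictTotalDegree (Option (Fin d)) ℝ n).map (TPh hd) with hW
  have hproj : ∀ n, ∃ p : Pol d, p.totalDegree ≤ n ∧ ∀ w ∈ W n, inner ℝ (Jm hf - TPh hd p) w = 0 := by
    intro n
    have : FiniteDimensional ℝ (W n) := by rw [hW]; infer_instance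
    obtain ⟨p, hp, hpe⟩ : (W n).starProjection (Jm hf) ∈ W n := Submodule.starProjection_apply_mem _ _
    refine ⟨p, (MvPolynomial.mem_restrictTotalDegree _ _ _).1 hp, fun w hw => ?_⟩
    rw [hpe]
    exact Submodule.starProjection_inner_eq_zero _ _ hw
  choose p hp horth using hproj
  have hT : ∀ q, TPh hd q = Jm (VV_Ph hd q).L2c := fun q => rfl
  refine ⟨p, hp, fun n q hq => ?_, ?_⟩
  · have := horth n (TPh hd q) ⟨q, (MvPolynomial.mem_restrictTotalDegree _ _ _).2 hq, rfl⟩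
    rw [hT, hT, ← Jm_sub hf, inner_Jm] at this
    exact this
  · have e : ∀ n, ∫ x, (f x - Ph (p n) x) * (f x - Ph (p n) x) * sF d x ^ 2 =
        ‖Jm hf - TPh hd (p n)‖ ^ 2 := fun n => by
      rw [← real_inner_self_eq_norm_sq, hT, ← Jm_sub hf, inner_Jm]
    simp only [e]
    have hz : Filter.Tendsto (fun n => ‖Jm hf - TPh hd (p n)‖) Filter.atTop (nhds 0) := by
      have hdense : (LinearMap.range (TPh hd)).topologicalClosure = ⊤ :=
        Submodule.topologicalClosure_eq_top_iff.2 (range_TPh_orth hd)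
      have hmem : Jm hf ∈ closure ((LinearMap.range (TPh hd) : Submodule ℝ _) : Set _) := by
        rw [← Submodule.topologicalClosure_coe, hdense]; trivial
      rw [Metric.tendsto_atTop]
      intro ε hε
      obtain ⟨_, ⟨q, rfl⟩, hq⟩ := Metric.mem_closure_iff.1 hmem ε hε
      refine ⟨q.totalDegree, fun n hn => ?_⟩
      rw [dist_zero_right, norm_norm]
      refine lt_of_le_of_lt ?_ (by rwa [dist_eq_norm] at hq)
      have hin : TPh hd (p n) - TPh hd q ∈ W n := by
        rw [← map_sub]
        refine ⟨_, ?_, rfl⟩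
        exact Submodule.sub_mem _ ((MvPolynomial.mem_restrictTotalDegree _ _ _).2 (hp n))
          ((MvPolynomial.mem_restrictTotalDegree _ _ _).2 hn)
      have h1 := horth n _ hin
      have h2 := norm_add_sq_eq_norm_sq_add_norm_sq_real h1
      rw [sub_add_sub_cancel] at h2
      have h3 := mul_self_nonneg ‖TPh hd (p n) - TPh hd q‖
      exact abs_le_of_sq_le_sq' (by nlinarith) (norm_nonneg _) |>.2
    simpa using hz.pow 2

end Density

section Final
variable {d : ℕ} {f g h : EuclideanSpace ℝ (Fin d) → ℝ}

/-- weighted inner product -/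
def IF (f g : EuclideanSpace ℝ (Fin d) → ℝ) : ℝ := ∫ x, f x * g x * sF d x ^ 2
/-- Dirichlet form -/
def DF (f g : EuclideanSpace ℝ (Fin d) → ℝ) : ℝ := ∫ x, ∑ i, pd f i x * pd g i x

lemma IF_symm (f g : EuclideanSpace ℝ (Fin d) → ℝ) : IF f g = IF g f :=
  integral_congr_ae (Filter.Eventually.of_forall fun x => by simp only; ring)
lemma DF_symm (f g : EuclideanSpace ℝ (Fin d) → ℝ) : DF f g = DF g f :=
  integral_congr_ae (Filter.Eventually.of_forall fun x =>
    Finset.sum_congr rfl fun i _ => by ring)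
lemma IF_sub_left (hf : VV f) (hg : VV g) (hh : VV h) :
    IF (fun x => f x - g x) h = IF f h - IF g h := by
  rw [IF, IF, IF, ← integral_sub (hf.integrable_I hh) (hg.integrable_I hh)]
  exact integral_congr_ae (Filter.Eventually.of_forall fun x => by simp only; ring)
lemma DF_sub_left (hf : VV f) (hg : VV g) (hh : VV h) :
    DF (fun x => f x - g x) h = DF f h - DF g h := by
  rw [DF, DF, DF, ← integral_sub (hf.integrable_D hh) (hg.integrable_D hh)]
  refine integral_congr_ae (Filter.Eventually.of_forall fun x => ?_)
  simp only [pd_sub hf.1 hg.1, ← Finset.sum_sub_distrib]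
  exact Finset.sum_congr rfl fun i _ => by ring
lemma IF_smul_right (c : ℝ) (f g : EuclideanSpace ℝ (Fin d) → ℝ) :
    IF f (fun x => c * g x) = c * IF f g := by
  rw [IF, IF, ← integral_const_mul]
  exact integral_congr_ae (Filter.Eventually.of_forall fun x => by simp only; ring)
lemma IF_nonneg (f : EuclideanSpace ℝ (Fin d) → ℝ) : 0 ≤ IF f f :=
  integral_nonneg fun x => mul_nonneg (mul_self_nonneg _) (sq_nonneg _)
lemma DF_nonneg (f : EuclideanSpace ℝ (Fin d) → ℝ) : 0 ≤ DF f f :=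
  integral_nonneg fun x => Finset.sum_nonneg fun i _ => mul_self_nonneg _

lemma IF_sub_self (hd : 3 ≤ d) (hf : VV f) (hg : VV g) :
    IF (fun x => f x - g x) (fun x => f x - g x) = IF f f - 2 * IF f g + IF g g := by
  have hs := hf.sub hd hg
  rw [IF_sub_left hf hg hs, IF_symm f, IF_symm g, IF_sub_left hf hg hf, IF_sub_left hf hg hg,
    IF_symm g f]; ring
lemma DF_sub_self (hd : 3 ≤ d) (hf : VV f) (hg : VV g) :
    DF (fun x => f x - g x) (fun x => f x - g x) = DF f f - 2 * DF f g + DF g g := by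
  have hs := hf.sub hd hg
  rw [DF_sub_left hf hg hs, DF_symm f, DF_symm g, DF_sub_left hf hg hf, DF_sub_left hf hg hg,
    DF_symm g f]; ring
lemma Bf_sub_self (hd : 3 ≤ d) (hf : L2c f) (hg : L2c g) :
    Bf (fun x => f x - g x) (fun x => f x - g x) = Bf f f - 2 * Bf f g + Bf g g := by
  have hs := hf.sub hg
  rw [Bf_sub_left hd hf hg hs, Bf_symm f, Bf_symm g, Bf_sub_left hd hf hg hf,
    Bf_sub_left hd hf hg hg, Bf_symm g f]; ring

lemma IF_eq_zero (hf : L2c f) (h0 : IF f f = 0) : f = 0 := by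
  have h1 := (integral_eq_zero_iff_of_nonneg
    (fun x => mul_nonneg (mul_self_nonneg (f x)) (sq_nonneg (sF d x))) hf.2).1 h0
  refine (Continuous.ae_eq_iff_eq (μ := volume) hf.1 continuous_zero).1 ?_
  filter_upwards [h1] with x hx
  have := (sF_pos x).ne'
  simpa [this] using hx

lemma IF_Lop_symm (hd : 3 ≤ d) (p q : Pol d) :
    IF (Ph p) (Ph (Lop q)) = IF (Ph (Lop p)) (Ph q) := by
  have h1 := formD hd (VV_Ph hd p) q
  have h2 := formD hd (VV_Ph hd q) p
  change DF _ _ = IF _ _ at h1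
  change DF _ _ = IF _ _ at h2
  rw [← h1, DF_symm, h2, IF_symm]

lemma eigen (hd : 3 ≤ d) (n : ℕ) (q : Pol d) (hq : q.totalDegree ≤ n + 1)
    (ho : ∀ g : Pol d, g.totalDegree ≤ n → IF (Ph q) (Ph g) = 0) (x) :
    Ph (Lop q) x = lam d (n + 1) * Ph q x := by
  set g := Lop q - lam d (n + 1) • q with hg
  have hgd : g.totalDegree ≤ n := Lop_sub_mem hq
  have e : Ph g = fun x => Ph (Lop q) x - Ph (lam d (n + 1) • q) x := funext fun x => Ph_sub _ _ x
  have e2 : Ph (lam d (n + 1) • q) = fun x => lam d (n + 1) * Ph q x := funext fun x => Ph_smul _ _ x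
  have h1 : IF (Ph g) (Ph g) = 0 := by
    nth_rw 1 [e]
    rw [IF_sub_left (VV_Ph hd _) (VV_Ph hd _) (VV_Ph hd _), ← IF_Lop_symm hd, ho _ (Lop_deg hgd),
      e2, IF_symm, IF_smul_right, IF_symm, ho _ hgd]
    simp
  have h2 := congrFun (IF_eq_zero (VV_Ph hd g).L2c h1) x
  rw [hg, Ph_sub, Ph_smul] at h2
  simpa [sub_eq_zero] using h2

lemma lam_mono (d : ℕ) (hd : 3 ≤ d) {m n : ℕ} (h : m ≤ n) : lam d m ≤ lam d n := by
  have hd' : (3 : ℝ) ≤ d := by exact_mod_cast hd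
  have h' : (m : ℝ) ≤ n := by exact_mod_cast h
  have hm : (0 : ℝ) ≤ m := Nat.cast_nonneg _
  rw [lam, lam]
  apply mul_le_mul <;> linarith

lemma lam_pos (d : ℕ) (hd : 3 ≤ d) (n : ℕ) : 0 < lam d n :=
  (lam0_pos hd).trans_le (lam_mono d hd (Nat.zero_le n))

lemma lam_one (d : ℕ) : lam d 1 = d * (d + 2) := by simp [lam]; ring
lemma lam_lt (d : ℕ) (hd : 3 ≤ d) : lam d 0 < lam d 1 ∧ lam d 1 < lam d 2 := by
  have hd' : (3 : ℝ) ≤ d := by exact_mod_cast hd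
  simp only [lam]; push_cast; constructor <;> nlinarith

/-- one step of the expansion -/
lemma step (hd : 3 ≤ d) (hf : VV f) (q : Pol d) {l : ℝ} (hl : 0 < l)
    (hq : ∀ x, Ph (Lop q) x = l * Ph q x)
    (ho : IF (fun x => f x - Ph q x) (Ph q) = 0) :
    ∃ c, 0 ≤ c ∧ IF f f = IF (fun x => f x - Ph q x) (fun x => f x - Ph q x) + c ∧
      DF f f = DF (fun x => f x - Ph q x) (fun x => f x - Ph q x) + l * c ∧
      Bf f f = Bf (fun x => f x - Ph q x) (fun x => f x - Ph q x) + c / l := by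
  have hV := VV_Ph hd q
  have e : Ph (Lop q) = fun x => l * Ph q x := funext hq
  rw [IF_sub_left hf hV hV, sub_eq_zero] at ho
  have hD : ∀ {k}, VV k → DF k (Ph q) = l * IF k (Ph q) := fun {k} hk => by
    have := formD hd hk q
    change DF _ _ = IF _ _ at this
    rw [this, e, IF_smul_right]
  have hB : ∀ {k}, VV k → Bf k (Ph q) = IF k (Ph q) / l := fun {k} hk =>
    Bf_Ph hd hk.L2c q hl.ne' hq
  refine ⟨IF (Ph q) (Ph q), IF_nonneg _, ?_, ?_, ?_⟩
  · rw [IF_sub_self hd hf hV, ho]; ring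
  · rw [DF_sub_self hd hf hV, hD hf, hD hV, ho]; ring
  · rw [Bf_sub_self hd hf.L2c hV.L2c, hB hf, hB hV, ho]; ring

lemma IF_one_pos (hd : 3 ≤ d) : 0 < IF (Ph (1 : Pol d)) (Ph 1) := by
  refine lt_of_le_of_ne (IF_nonneg _) fun h => ?_
  have := congrFun (IF_eq_zero (VV_Ph hd (1 : Pol d)).L2c h.symm) 0
  rw [Ph_one] at this
  exact (uAT_pos _).ne' this

theorem core (hd : 3 ≤ d) (hf : VV f) (h0 : IF f (Ph 1) = 0) :
    ∃ p : Pol d, p.totalDegree ≤ 1 ∧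
      (∀ q : Pol d, q.totalDegree ≤ 1 → IF (fun x => f x - Ph p x) (Ph q) = 0) ∧
      DF f f - lam d 1 * IF f f = DF (fun x => f x - Ph p x) (fun x => f x - Ph p x)
        - lam d 1 * IF (fun x => f x - Ph p x) (fun x => f x - Ph p x) ∧
      IF f f / lam d 1 - Bf f f = IF (fun x => f x - Ph p x) (fun x => f x - Ph p x) / lam d 1
        - Bf (fun x => f x - Ph p x) (fun x => f x - Ph p x) ∧
      lam d 2 * IF (fun x => f x - Ph p x) (fun x => f x - Ph p x) ≤
        DF (fun x => f x - Ph p x) (fun x => f x - Ph p x) ∧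
      Bf (fun x => f x - Ph p x) (fun x => f x - Ph p x) ≤
        IF (fun x => f x - Ph p x) (fun x => f x - Ph p x) / lam d 2 := by
  obtain ⟨p, hp, ho, ht⟩ := proj_exists hd hf.L2c
  have ho' : ∀ n (q : Pol d), q.totalDegree ≤ n → IF (fun x => f x - Ph (p n) x) (Ph q) = 0 := ho
  set r : ℕ → EuclideanSpace ℝ (Fin d) → ℝ := fun n x => f x - Ph (p n) x with hr
  have hrV : ∀ n, VV (r n) := fun n => hf.sub hd (VV_Ph hd _)
  have hs : ∀ n, ∃ c, 0 ≤ c ∧ IF (r n) (r n) = IF (r (n+1)) (r (n+1)) + c ∧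
      DF (r n) (r n) = DF (r (n+1)) (r (n+1)) + lam d (n+1) * c ∧
      Bf (r n) (r n) = Bf (r (n+1)) (r (n+1)) + c / lam d (n+1) := by
    intro n
    have e : (fun x => r n x - Ph (p (n+1) - p n) x) = r (n+1) := by
      funext x; simp only [hr, Ph_sub]; ring
    have e' : (Ph (p (n+1) - p n)) = fun x => r n x - r (n+1) x := by
      funext x; simp only [hr, Ph_sub]; ring
    have hdeg : (p (n+1) - p n).totalDegree ≤ n + 1 :=
      (MvPolynomial.totalDegree_sub _ _).trans (max_le (hp _) ((hp n).trans (Nat.le_succ n)))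
    have := step hd (hrV n) (p (n+1) - p n) (lam_pos d hd (n+1)) (eigen hd n _ hdeg (fun g hg => by
      rw [e', IF_sub_left (hrV _) (hrV _) (VV_Ph hd g), ho' n g hg,
        ho' (n+1) g (hg.trans (Nat.le_succ n))]; simp)) (by
      rw [e]; exact ho' _ _ hdeg)
    rwa [e] at this
  have hr0 : r 0 = f := by
    have h1 := MvPolynomial.totalDegree_eq_zero_iff_eq_C.1 (Nat.le_zero.1 (hp 0))
    set c := MvPolynomial.coeff 0 (p 0)
    have e : Ph (p 0) = fun x => c * Ph 1 x := by
      funext x; rw [h1, Ph, evo_C, Ph_one, mul_comm]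
    have h2 := ho' 0 1 (by simp)
    rw [IF_sub_left hf (VV_Ph hd _) (VV_Ph hd _), h0, e, IF_symm, IF_smul_right] at h2
    have hc : c = 0 := by
      rcases mul_eq_zero.1 (neg_eq_zero.1 ((zero_sub _).symm.trans h2)) with h | h
      · exact h
      · exact absurd h (IF_one_pos hd).ne'
    funext x
    simp only [hr, e, hc]; ring
  have hl2 := lam_pos d hd 2
  have ind : ∀ n, DF (r (n+1)) (r (n+1)) - lam d 2 * IF (r (n+1)) (r (n+1)) ≤
      DF (r 1) (r 1) - lam d 2 * IF (r 1) (r 1) ∧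
      IF (r (n+1)) (r (n+1)) / lam d 2 - Bf (r (n+1)) (r (n+1)) ≤
      IF (r 1) (r 1) / lam d 2 - Bf (r 1) (r 1) := by
    intro n
    induction n with
    | zero => simp
    | succ n ih =>
      obtain ⟨c, hc, h1, h2, h3⟩ := hs (n+1)
      have hm : lam d 2 ≤ lam d (n+1+1) := lam_mono d hd (by omega)
      constructor
      · nlinarith [ih.1]
      · have hdv : c / lam d (n+1+1) ≤ c / lam d 2 := div_le_div_of_nonneg_left hc hl2 hm
        have hx : IF (r (n+1)) (r (n+1)) / lam d 2 =
          IF (r (n+1+1)) (r (n+1+1)) / lam d 2 + c / lam d 2 := by rw [h1, add_div]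
        linarith [ih.2]
  have ht' : Filter.Tendsto (fun n => IF (r (n+1)) (r (n+1))) Filter.atTop (nhds 0) :=
    (Filter.tendsto_add_atTop_iff_nat 1).2 ht
  obtain ⟨c, hc, h1, h2, h3⟩ := hs 0
  rw [hr0, zero_add] at h1 h2 h3
  refine ⟨p 1, hp 1, ho' 1, ?_, ?_, ?_, ?_⟩
  · change _ = DF (r 1) (r 1) - lam d 1 * IF (r 1) (r 1)
    rw [h1, h2]; ring
  · change _ = IF (r 1) (r 1) / lam d 1 - Bf (r 1) (r 1)
    rw [h1, h3]; ring
  · change lam d 2 * IF (r 1) (r 1) ≤ DF (r 1) (r 1)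
    have hz : Filter.Tendsto (fun n => -(lam d 2 * IF (r (n+1)) (r (n+1)))) Filter.atTop (nhds 0) := by
      simpa using (ht'.const_mul (lam d 2)).neg
    have := le_of_tendsto' hz (fun n => by
      have := (ind n).1
      have h4 := DF_nonneg (r (n+1))
      show _ ≤ DF (r 1) (r 1) - lam d 2 * IF (r 1) (r 1)
      linarith)
    linarith
  · change Bf (r 1) (r 1) ≤ IF (r 1) (r 1) / lam d 2
    have hz : Filter.Tendsto (fun n => -(IF (r (n+1)) (r (n+1)) / lam d 0)) Filter.atTop (nhds 0) := by
      simpa using (ht'.div_const (lam d 0)).neg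
    have := le_of_tendsto' hz (fun n => by
      have := (ind n).2
      have h4 := (abs_le.1 (Bf_le hd (hrV (n+1)).L2c)).2
      change _ ≤ IF (r (n+1)) (r (n+1)) / lam d 0 at h4
      have h5 := div_nonneg (IF_nonneg (r (n+1))) hl2.le
      show _ ≤ IF (r 1) (r 1) / lam d 2 - Bf (r 1) (r 1)
      linarith)
    linarith

lemma IF_zero : IF (0 : EuclideanSpace ℝ (Fin d) → ℝ) 0 = 0 := by simp [IF]
lemma DF_zero : DF (0 : EuclideanSpace ℝ (Fin d) → ℝ) 0 = 0 := by simp [DF, pd]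
lemma Bf_zero : Bf (0 : EuclideanSpace ℝ (Fin d) → ℝ) 0 = 0 := by simp [Bf, Bk]

lemma decomp (p : Pol d) (hp : p.totalDegree ≤ 1) : ∃ (c : ℝ) (l : Option (Fin d) → ℝ),
    p = c • 1 + ∑ a, l a • MvPolynomial.X a := by
  have h := p.sum_homogeneousComponent
  have h0 : MvPolynomial.homogeneousComponent 0 p = MvPolynomial.coeff 0 p • 1 := by
    rw [MvPolynomial.homogeneousComponent_zero, MvPolynomial.smul_eq_C_mul, mul_one]
  have h1 : MvPolynomial.homogeneousComponent 1 p ∈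
      MvPolynomial.homogeneousSubmodule (Option (Fin d)) ℝ 1 :=
    p.homogeneousComponent_isHomogeneous 1
  rw [MvPolynomial.homogeneousSubmodule_one_eq_span_X, Submodule.mem_span_range_iff_exists_fun] at h1
  obtain ⟨l, hl⟩ := h1
  refine ⟨MvPolynomial.coeff 0 p, l, ?_⟩
  rw [hl, ← h0]
  rcases Nat.le_one_iff_eq_zero_or_eq_one.1 hp with h2 | h2
  · rw [MvPolynomial.homogeneousComponent_eq_zero 1 p (by omega), add_zero]
    rw [h2] at h; simpa using h.symm
  · rw [h2] at h; simpa [Finset.sum_range_succ] using h.symm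

lemma Ph_sum {ι : Type*} (s : Finset ι) (p : ι → Pol d) (x) :
    Ph (∑ a ∈ s, p a) x = ∑ a ∈ s, Ph (p a) x := by
  simp [Ph, evo, Finset.mul_sum]

lemma Ph_X_some (i : Fin d) (x) : Ph (MvPolynomial.X (some i)) x = 2 * atFi d i x := by
  rw [Ph, evo_X, om, atFi, sF]; ring

lemma Ph_X_none (x : EuclideanSpace ℝ (Fin d)) : Ph (MvPolynomial.X none) x = atFlast d x := by
  have := rho_pos x
  rw [Ph, evo_X, om, atFlast, sF]; field_simp; ring

lemma IF_one_X (hd : 3 ≤ d) (a : Option (Fin d)) : IF (Ph 1) (Ph (MvPolynomial.X a)) = 0 := by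
  have h1 : Lop (MvPolynomial.X a : Pol d) = lam d 1 • MvPolynomial.X a := by
    rw [Lop_homog (MvPolynomial.isHomogeneous_X ℝ a)]
    have : ∀ b, MvPolynomial.pderiv b (MvPolynomial.pderiv b (MvPolynomial.X a : Pol d)) = 0 := by
      intro b
      rw [MvPolynomial.pderiv_X]
      by_cases hb : a = b
      · subst hb; simp
      · simp [Pi.single_apply, hb]
    simp only [this, Finset.sum_const_zero, smul_zero, sub_zero]
  have h2 : Lop (1 : Pol d) = lam d 0 • 1 := by
    rw [Lop_one, MvPolynomial.smul_eq_C_mul, mul_one]; congr 1; simp [lam]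
  have h := IF_Lop_symm hd 1 (MvPolynomial.X a : Pol d)
  rw [h1, h2, funext (fun x => Ph_smul (lam d 1) (MvPolynomial.X a) x),
    funext (fun x => Ph_smul (lam d 0) (1 : Pol d) x), IF_smul_right, IF_symm (fun x => _ * _),
    IF_smul_right, IF_symm (Ph (MvPolynomial.X a))] at h
  have := (lam_lt d hd).1
  have h3 : (lam d 1 - lam d 0) * IF (Ph 1) (Ph (MvPolynomial.X a : Pol d)) = 0 := by linarith
  exact (mul_eq_zero.1 h3).resolve_left (by linarith)

lemma VV_of (hf : MemD12 d f) (hL2 : Integrable (fun x => f x ^ 2 / (1 + ‖x‖ ^ 2) ^ 2)) : VV f := by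
  have hH : HD f (pd f) := ⟨hf.1, fun _ _ => rfl⟩
  refine ⟨hf.1, fun i => ?_, hf.2.2, ?_⟩
  · refine hf.2.1.mono' ((measurable_pd f i).pow_const 2).aestronglyMeasurable
      (Filter.Eventually.of_forall fun x => ?_)
    rw [hH.gradient_norm, norm_of_nonneg (sq_nonneg _)]
    exact Finset.single_le_sum (f := fun i => pd f i x ^ 2) (fun j _ => sq_nonneg _) (Finset.mem_univ i)
  · refine hL2.congr (Filter.Eventually.of_forall fun x => ?_)
    simp only [div_rho]; ring

lemma quadF_eq (hf : VV f) : quadF d f = DF f f - lam d 1 * IF f f := by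
  rw [quadF, lam_one]
  congr 1
  · refine integral_congr_ae (Filter.Eventually.of_forall fun x => ?_)
    simp only [hf.HD.gradient_norm, sq]
  · congr 1
    refine integral_congr_ae (Filter.Eventually.of_forall fun x => ?_)
    simp only [div_rho]; ring

theorem final (hd : 3 ≤ d) (hf : MemD12 d f)
    (hL2 : Integrable (fun x => f x ^ 2 / (1 + ‖x‖ ^ 2) ^ 2))
    (o0 : (∫ x, f x * uAT d x / (1 + ‖x‖ ^ 2) ^ 2) = 0) :
    (quadF d f = 0 ↔ quadG d f = 0) ∧
    (quadF d f = 0 ↔ ∃ (c : Fin d → ℝ) (c' : ℝ),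
      f =ᵐ[volume] fun x => (∑ i, c i * atFi d i x) + c' * atFlast d x) := by
  have hV := VV_of hf hL2
  have h0 : IF f (Ph 1) = 0 := by
    rw [← o0]
    refine integral_congr_ae (Filter.Eventually.of_forall fun x => ?_)
    simp only [div_rho, Ph_one]
  obtain ⟨p, hp, ho, hF, hG, hD, hB⟩ := core hd hV h0
  set r := fun x => f x - Ph p x with hr
  have hrV : VV r := hV.sub hd (VV_Ph hd p)
  have hl := (lam_lt d hd).2
  have l1 := lam_pos d hd 1
  have ha := IF_nonneg r
  have F0 : quadF d f = 0 ↔ r = 0 := by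
    rw [quadF_eq hV, hF]
    constructor
    · intro h
      refine IF_eq_zero hrV.L2c ?_
      nlinarith
    · intro h; rw [h, IF_zero, DF_zero]; simp
  have G0 : quadG d f = 0 ↔ r = 0 := by
    rw [quadG_eq hd hV.L2c]
    change IF f f / lam d 1 - Bf f f = 0 ↔ _
    rw [hG]
    constructor
    · intro h
      refine IF_eq_zero hrV.L2c ?_
      by_contra hne
      have hpos : 0 < IF r r := lt_of_le_of_ne ha (Ne.symm hne)
      have := div_lt_div_of_pos_left hpos l1 hl
      linarith
    · intro h; rw [h, IF_zero, Bf_zero]; simp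
  refine ⟨F0.trans G0.symm, F0.trans ⟨fun h => ?_, ?_⟩⟩
  · have hfp : f = Ph p := by
      funext x; have := congrFun h x; simpa [hr, sub_eq_zero] using this
    obtain ⟨c, l, hcl⟩ := decomp p hp
    have hc : c = 0 := by
      have e : (fun x => Ph p x - Ph (∑ a, l a • MvPolynomial.X a) x) = fun x => c * Ph 1 x := by
        funext x; rw [hcl, Ph_add, Ph_smul]; ring
      have e1 := IF_sub_left (VV_Ph hd p) (VV_Ph hd (∑ a, l a • MvPolynomial.X a))
        (VV_Ph hd (1 : Pol d))
      have e2 : IF (Ph (∑ a, l a • MvPolynomial.X a)) (Ph (1 : Pol d)) = 0 := by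
        have : IF (Ph (∑ a, l a • MvPolynomial.X a)) (Ph (1 : Pol d)) =
            ∑ a, l a * IF (Ph 1) (Ph (MvPolynomial.X a : Pol d)) := by
          rw [IF_symm]
          simp only [← IF_smul_right]
          unfold IF
          rw [← integral_finsetSum]
          · refine integral_congr_ae (Filter.Eventually.of_forall fun x => ?_)
            simp only [Ph_sum, Ph_smul, Finset.mul_sum, Finset.sum_mul]
          · intro a _
            have := ((VV_Ph hd (1 : Pol d)).integrable_I
              (VV_Ph hd (MvPolynomial.X a : Pol d))).const_mul (l a)
            exact this.congr (Filter.Eventually.of_forall fun x => by simp only; ring)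
        rw [this]
        exact Finset.sum_eq_zero fun a _ => by rw [IF_one_X hd, mul_zero]
      rw [e, e2, ← hfp, h0, IF_symm, IF_smul_right, sub_zero] at e1
      exact (mul_eq_zero.1 e1).resolve_right (IF_one_pos hd).ne'
    refine ⟨fun i => 2 * l (some i), l none, Filter.Eventually.of_forall fun x => ?_⟩
    rw [hfp, hcl, hc, zero_smul, zero_add, Ph_sum, Fintype.sum_option]
    simp only [Ph_smul, Ph_X_some, Ph_X_none]
    rw [add_comm]
    congr 1
    exact Finset.sum_congr rfl fun i _ => by ring
  · rintro ⟨c, c', hcc⟩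
    set q : Pol d := ∑ i, (c i / 2) • MvPolynomial.X (some i) + c' • MvPolynomial.X none with hq
    have hqd : q.totalDegree ≤ 1 := by
      rw [← MvPolynomial.mem_restrictTotalDegree]
      have hX : ∀ a, (MvPolynomial.X a : Pol d) ∈
          MvPolynomial.restrictTotalDegree (Option (Fin d)) ℝ 1 := fun a => by
        rw [MvPolynomial.mem_restrictTotalDegree, MvPolynomial.totalDegree_X]
      exact Submodule.add_mem _ (Submodule.sum_mem _ fun i _ => Submodule.smul_mem _ _ (hX _))
        (Submodule.smul_mem _ _ (hX _))
    have hfq : f = Ph q := by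
      refine (Continuous.ae_eq_iff_eq (μ := volume) hV.continuous (continuous_Ph q)).1 ?_
      refine hcc.trans (Filter.Eventually.of_forall fun x => ?_)
      simp only [hq, Ph_add, Ph_sum, Ph_smul, Ph_X_some, Ph_X_none]
      congr 1
      exact Finset.sum_congr rfl fun i _ => by ring
    have hrq : r = Ph (q - p) := by
      funext x; rw [hr, Ph_sub, ← hfq]
    refine IF_eq_zero hrV.L2c ?_
    have := ho (q - p) ((MvPolynomial.totalDegree_sub _ _).trans (max_le hqd hp))
    rwa [← hrq] at this

end Final

/-- the kernels of the quadratic forms `F` and `G` coincide and consist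
of the linear combinations of `f_1, …, f_{d+1}`. -/
theorem ker_quadF_eq_ker_quadG (d : ℕ) (hd : 3 ≤ d)
    (f : EuclideanSpace ℝ (Fin d) → ℝ) (hf : MemD12 d f)
    (hL2 : Integrable (fun x => f x ^ 2 / (1 + ‖x‖ ^ 2) ^ 2))
    (o0 : (∫ x, f x * uAT d x / (1 + ‖x‖ ^ 2) ^ 2) = 0) :
    (quadF d f = 0 ↔ quadG d f = 0) ∧
    (quadF d f = 0 ↔ ∃ (c : Fin d → ℝ) (c' : ℝ),
      f =ᵐ[volume] fun x => (∑ i, c i * atFi d i x) + c' * atFlast d x) := by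
  exact final hd hf hL2 o0
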